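/- arXiv:2505.22127 — 13 statements merged into one kernel-verified Lean document; each statement's English description precedes it below -/
import Mathlib

section
/- Let n ≥ 2 and let (i_1,…,i_N) with N = n(n−1)/2 and each i_t ∈ {1,…,n−1} be a reduced word for the longest element w_0 of the symmetric group S_n (i.e. s_{i_1}s_{i_2}⋯s_{i_N} = w_0). Then the sequence (1,2,…,n−1) occurs as a subsequence of (i_1,…,i_N): there exist indices t_1 < t_2 < ⋯ < t_{n−1} with i_{t_k} = k for every 1 ≤ k ≤ n−1. -/
/-- The adjacent transposition `s_j` swapping `j` and `j+1` (acting on `ℕ`,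
restricting to the usual generator of the symmetric group on `{1, …, n}`). -/
def adjSwap (j : ℕ) : Equiv.Perm ℕ := Equiv.swap j (j + 1)

def wireQ (i : ℕ → ℕ) : ℕ → ℕ
  | 0 => 1
  | t + 1 => adjSwap (i (t + 1)) (wireQ i t)

lemma wireQ_prod (i : ℕ → ℕ) (m : ℕ) :
    (((List.range m).map fun t => adjSwap (i (t + 1))).prod : Equiv.Perm ℕ) (wireQ i m) = 1 := by
  induction m with
  | zero => simp [wireQ]
  | succ m ih =>
    rw [List.range_succ, List.map_append, List.prod_append]
    simpa [wireQ, adjSwap] using ih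

lemma wireQ_step (i : ℕ → ℕ) (t k : ℕ) (h1 : wireQ i t ≤ k) (h2 : k < wireQ i (t + 1)) :
    i (t + 1) = k ∧ wireQ i (t + 1) = k + 1 := by
  simp only [wireQ, adjSwap, Equiv.swap_apply_def] at h2 ⊢
  split_ifs at h2 ⊢ <;> omega

lemma wireQ_first (i : ℕ → ℕ) (N k : ℕ) (hk : 1 ≤ k) (h : k < wireQ i N) :
    sInf {t | k < wireQ i t} ∈ Finset.Icc 1 N ∧ i (sInf {t | k < wireQ i t}) = k ∧
      wireQ i (sInf {t | k < wireQ i t}) = k + 1 := by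
  have hm : sInf {t | k < wireQ i t} ∈ {t | k < wireQ i t} := Nat.sInf_mem ⟨N, h⟩
  have hle : sInf {t | k < wireQ i t} ≤ N := Nat.sInf_le h
  have hlt : ∀ s, s < sInf {t | k < wireQ i t} → s ∉ {t | k < wireQ i t} :=
    fun s hs => Nat.notMem_of_lt_sInf hs
  generalize sInf {t | k < wireQ i t} = T at *
  cases T with
  | zero =>
    simp [wireQ] at hm
    omega
  | succ s =>
    have := hlt s (by omega)
    simp only [Set.mem_setOf_eq, not_lt] at this hm
    have h3 := wireQ_step i s k this hm
    exact ⟨by simp; omega, h3⟩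

/-- if `(i 1, …, i N)`, `N = n(n-1)/2`, is a (necessarily reduced) word
for the longest element `w₀` of `Sₙ` (i.e. `s_{i 1} ⋯ s_{i N} = w₀`, where
`w₀ j = n + 1 - j` on `{1, …, n}`), then the pattern `(1, 2, …, n-1)` occurs as a
subsequence of `(i 1, …, i N)`. -/
theorem pattern_one_to_nsub1_subsequence
    (n N : ℕ) (hn : 2 ≤ n) (hN : N = n * (n - 1) / 2)
    (i : ℕ → ℕ) (hi : ∀ t ∈ Finset.Icc 1 N, 1 ≤ i t ∧ i t ≤ n - 1)
    (hword : ∀ j ∈ Finset.Icc 1 n,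
      (((List.range N).map fun t => adjSwap (i (t + 1))).prod : Equiv.Perm ℕ) j
        = n + 1 - j) :
    ∃ t : ℕ → ℕ,
      (∀ k ∈ Finset.Icc 1 (n - 1), t k ∈ Finset.Icc 1 N) ∧
      (∀ k, 1 ≤ k → k + 1 ≤ n - 1 → t k < t (k + 1)) ∧
      (∀ k ∈ Finset.Icc 1 (n - 1), i (t k) = k) := by
  have hq : wireQ i N = n := by
    apply (((List.range N).map fun t => adjSwap (i (t + 1))).prod : Equiv.Perm ℕ).injective
    rw [wireQ_prod, hword n (by simp; omega)]
    omega
  refine ⟨fun k => sInf {t | k < wireQ i t}, ?_, ?_, ?_⟩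
  · intro k hk
    rw [Finset.mem_Icc] at hk
    exact (wireQ_first i N k hk.1 (by omega)).1
  · intro k hk hk2
    have a := (wireQ_first i N k hk (by omega)).2.2
    have b := (wireQ_first i N (k + 1) (by omega) (by omega)).2.2
    refine lt_of_le_of_ne (Nat.sInf_le ?_) ?_
    · rw [Set.mem_setOf_eq, b]
      omega
    · intro h
      simp only at h
      rw [h, b] at a
      omega
  · intro k hk
    rw [Finset.mem_Icc] at hk
    exact (wireQ_first i N k hk.1 (by omega)).2.1
end

section
/- Let n ≥ 2 and let (i_1,…,i_N), N = n(n−1)/2, be a reduced word for the longest element w_0 of S_n. Let t_1 < t_2 < ⋯ < t_{n−1} be the greedy indices for the pattern (1,2,…,n−1): t_1 is minimal with i_{t_1} = 1, and for k ≥ 2, t_k is minimal subject to t_k > t_{k−1} and i_{t_k} = k. For 0 ≤ t ≤ N set w^{(t)} := s_{i_t} ∘ s_{i_{t−1}} ∘ ⋯ ∘ s_{i_1} (composition of functions on {1,…,n}, applying s_{i_1} first; w^{(0)} = id). Then for every 1 ≤ k ≤ n−1 one has w^{(t_k − 1)}(1) = k. (Equivalently: in the wiring diagram of the reduced word, each greedy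 crossing t_k lies on the wire ℓ_1, which sits at level k just before that crossing; these are exactly the crossings of ℓ_1 with the other wires, as used for the weight-zero string z_1.) -/
lemma gc_prod (i : ℕ → ℕ) (W : ℕ → Equiv.Perm ℕ) (hW0 : W 0 = 1)
    (hWs : ∀ m, W (m + 1) = adjSwap (i (m + 1)) * W m) (m : ℕ) :
    (((List.range m).map fun t => adjSwap (i (t + 1))).prod : Equiv.Perm ℕ) * W m = 1 := by
  induction m with
  | zero => simp [hW0]
  | succ m ih =>
    rw [List.range_succ, List.map_append, List.prod_append, hWs]
    simp only [List.map_cons, List.map_nil, List.prod_cons, List.prod_nil, mul_one]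
    have h : adjSwap (i (m + 1)) * adjSwap (i (m + 1)) = 1 := by simp [adjSwap]
    rw [mul_assoc, ← mul_assoc (adjSwap _) (adjSwap _), h, one_mul, ih]

/-- Inversions of `w`, as pairs `(q-1, p-1)` with `p < q`. -/
def gcInv (n : ℕ) (w : Equiv.Perm ℕ) : Finset (Σ _ : ℕ, ℕ) :=
  ((Finset.range n).sigma (fun q => Finset.range q)).filter
    (fun x => w (x.1 + 1) < w (x.2 + 1))

lemma gc_new (j : ℕ) (w : Equiv.Perm ℕ) (p q : ℕ)
    (h : (adjSwap j * w) q < (adjSwap j * w) p) (h' : ¬ w q < w p) (hpq : p ≠ q) :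
    w p = j ∧ w q = j + 1 := by
  have hne : w p ≠ w q := fun e => hpq (w.injective e)
  simp only [adjSwap, Equiv.Perm.mul_apply, Equiv.swap_apply_def] at h
  split_ifs at h <;> omega

lemma gc_step (n j : ℕ) (w : Equiv.Perm ℕ) :
    (gcInv n (adjSwap j * w)).card ≤ (gcInv n w).card + 1 := by
  have : gcInv n (adjSwap j * w) ⊆
      insert (⟨w.symm (j + 1) - 1, w.symm j - 1⟩ : Σ _ : ℕ, ℕ) (gcInv n w) := by
    rintro ⟨q, p⟩ hx
    simp only [gcInv, Finset.mem_filter, Finset.mem_sigma, Finset.mem_range,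
      Finset.mem_insert] at hx ⊢
    by_cases h' : w (q + 1) < w (p + 1)
    · exact Or.inr ⟨hx.1, h'⟩
    · left
      obtain ⟨h1, h2⟩ := gc_new j w (p + 1) (q + 1) hx.2 h' (by omega)
      rw [← h2, ← h1]
      simp
  exact (Finset.card_le_card this).trans (Finset.card_insert_le _ _)

lemma gc_down (n j : ℕ) (w : Equiv.Perm ℕ) (hj : w 1 = j + 1) :
    (gcInv n (adjSwap j * w)).card ≤ (gcInv n w).card := by
  apply Finset.card_le_card
  rintro ⟨q, p⟩ hx
  simp only [gcInv, Finset.mem_filter, Finset.mem_sigma, Finset.mem_range] at hx ⊢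
  refine ⟨hx.1, ?_⟩
  by_contra h'
  obtain ⟨h1, h2⟩ := gc_new j w (p + 1) (q + 1) hx.2 h' (by omega)
  have := w.injective (h2.trans hj.symm)
  omega

/-- for a reduced word `(i 1, …, i N)`, `N = n(n-1)/2`, of the longest
element `w₀` of `Sₙ`, with greedy indices `t 1 < ⋯ < t (n-1)` for the pattern
`(1, 2, …, n-1)`, and with `W m = s_{i m} ∘ ⋯ ∘ s_{i 1}` (applying `s_{i 1}` first,
`W 0 = id`), one has `W (t k - 1) 1 = k` for all `1 ≤ k ≤ n-1`. -/
theorem greedy_crossings_on_wire_one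
    (n N : ℕ) (hn : 2 ≤ n) (hN : N = n * (n - 1) / 2)
    (i : ℕ → ℕ) (hi : ∀ t ∈ Finset.Icc 1 N, 1 ≤ i t ∧ i t ≤ n - 1)
    (hword : ∀ j ∈ Finset.Icc 1 n,
      (((List.range N).map fun t => adjSwap (i (t + 1))).prod : Equiv.Perm ℕ) j
        = n + 1 - j)
    (t : ℕ → ℕ)
    (ht_range : ∀ k ∈ Finset.Icc 1 (n - 1), t k ∈ Finset.Icc 1 N)
    (ht_letter : ∀ k ∈ Finset.Icc 1 (n - 1), i (t k) = k)
    (ht_mono : ∀ k, 1 ≤ k → k + 1 ≤ n - 1 → t k < t (k + 1))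
    (ht_min1 : ∀ r ∈ Finset.Icc 1 N, r < t 1 → i r ≠ 1)
    (ht_min : ∀ k, 2 ≤ k → k ≤ n - 1 →
      ∀ r ∈ Finset.Icc 1 N, t (k - 1) < r → r < t k → i r ≠ k)
    (W : ℕ → Equiv.Perm ℕ) (hW0 : W 0 = 1)
    (hWs : ∀ m, W (m + 1) = adjSwap (i (m + 1)) * W m) :
    ∀ k ∈ Finset.Icc 1 (n - 1), W (t k - 1) 1 = k := by
  have hadd : ∀ m d, (gcInv n (W (m + d))).card ≤ (gcInv n (W m)).card + d := by
    intro m d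
    induction d with
    | zero => simp
    | succ d ih =>
      rw [← add_assoc, hWs]
      have := gc_step n (i (m + d + 1)) (W (m + d))
      omega
  have hzero : (gcInv n (W 0)).card = 0 := by
    rw [Finset.card_eq_zero, gcInv, Finset.filter_eq_empty_iff]
    rintro ⟨q, p⟩ hx
    simp only [Finset.mem_sigma, Finset.mem_range] at hx
    simp only [hW0, Equiv.Perm.one_apply]
    omega
  have hWN : ∀ p, 1 ≤ p → p ≤ n → W N p = n + 1 - p := by
    intro p h1 h2
    have hP := hword (n + 1 - p) (by simp only [Finset.mem_Icc]; omega)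
    have hPW := mul_eq_one_iff_eq_inv'.mp (gc_prod i W hW0 hWs N)
    rw [hPW, Equiv.Perm.inv_eq_iff_eq, hP]
    omega
  have hfull : (gcInv n (W N)).card = N := by
    rw [gcInv, Finset.filter_true_of_mem, Finset.card_sigma]
    · simp only [Finset.card_range]
      rw [Finset.sum_range_id, hN]
    · rintro ⟨q, p⟩ hx
      simp only [Finset.mem_sigma, Finset.mem_range] at hx
      simp only
      rw [hWN _ (by omega) (by omega), hWN _ (by omega) (by omega)]
      omega
  have hnd : ∀ m, m < N → W m 1 ≠ i (m + 1) + 1 := by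
    intro m hm h
    have h1 := gc_down n (i (m + 1)) (W m) h
    rw [← hWs] at h1
    have h2 := hadd 0 m
    have h3 := hadd (m + 1) (N - (m + 1))
    rw [show m + 1 + (N - (m + 1)) = N by omega, hfull] at h3
    rw [zero_add] at h2
    omega
  have hstay : ∀ k a d, a + d ≤ N → W a 1 = k → (∀ r, a < r → r ≤ a + d → i r ≠ k) →
      W (a + d) 1 = k := by
    intro k a d
    induction d with
    | zero => intro _ h _; exact h
    | succ d ih =>
      intro hle h hr
      have h1 := ih (by omega) h (fun r h1 h2 => hr r h1 (by omega))
      have h2 := hnd (a + d) (by omega)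
      have h3 := hr (a + d + 1) (by omega) (by omega)
      rw [← add_assoc, hWs, Equiv.Perm.mul_apply, h1, adjSwap]
      exact Equiv.swap_apply_of_ne_of_ne (Ne.symm h3) (by omega)
  intro k hk
  rw [Finset.mem_Icc] at hk
  obtain ⟨hk1, hk2⟩ := hk
  induction k, hk1 using Nat.le_induction with
  | base =>
    have hr := Finset.mem_Icc.mp (ht_range 1 (by simp only [Finset.mem_Icc]; omega))
    have := hstay 1 0 (t 1 - 1) (by omega) (by simp [hW0])
      (fun r h1 h2 => ht_min1 r (by simp only [Finset.mem_Icc]; omega) (by omega))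
    rwa [zero_add] at this
  | succ k hk1 ih =>
    have ih := ih (by omega)
    have hr := Finset.mem_Icc.mp (ht_range k (by simp only [Finset.mem_Icc]; omega))
    have hr' := Finset.mem_Icc.mp (ht_range (k + 1) (by simp only [Finset.mem_Icc]; omega))
    have hl := ht_letter k (by simp only [Finset.mem_Icc]; omega)
    have hm := ht_mono k hk1 hk2
    have hs := hWs (t k - 1)
    rw [show t k - 1 + 1 = t k by omega, hl] at hs
    have h1 : W (t k) 1 = k + 1 := by
      rw [hs, Equiv.Perm.mul_apply, ih, adjSwap, Equiv.swap_apply_left]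
    have := hstay (k + 1) (t k) (t (k + 1) - 1 - t k) (by omega) h1
      (fun r h1 h2 => ht_min (k + 1) (by omega) hk2 r (by simp only [Finset.mem_Icc]; omega)
        (by simpa using h1) (by omega))
    rwa [show t k + (t (k + 1) - 1 - t k) = t (k + 1) - 1 by omega] at this
end

section
/- Let n ≥ 2 and let (i_1,…,i_N), N = n(n−1)/2, be a reduced word for the longest element w_0 of S_n. Let t_1 < t_2 < ⋯ < t_{n−1} be the greedy indices for the pattern (n−1, n−2, …, 1): t_1 is minimal with i_{t_1} = n−1, and for k ≥ 2, t_k is minimal subject to t_k > t_{k−1} and i_{t_k} = n−k. For 0 ≤ t ≤ N set w^{(t)} := s_{i_t} ∘ s_{i_{t−1}} ∘ ⋯ ∘ s_{i_1} (applying s_{i_1} first; w^{(0)} = id). Then for every 1 ≤ k ≤ n−1 one has w^{(t_k − 1)}(n) = n−k+1. (Equivalently: each greedy crossing t_k lies on the wire ℓ_n, which sits at level n−k+1 just before that crossing; these are exactly the crossings of ℓ_n with the other wires, as used for the weight-zero string z_{n−1}.) -/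
/-- inversions of `w` on wires `1..n` -/
def invSet (n : ℕ) (w : Equiv.Perm ℕ) : Finset (Σ _ : ℕ, ℕ) :=
  ((Finset.range n).sigma fun q => Finset.range q).filter
    fun x => w (x.1 + 1) < w (x.2 + 1)

lemma mem_invSet (n : ℕ) (w : Equiv.Perm ℕ) (q p : ℕ) :
    (⟨q, p⟩ : Σ _ : ℕ, ℕ) ∈ invSet n w ↔ (q < n ∧ p < q) ∧ w (q + 1) < w (p + 1) := by
  unfold invSet
  rw [Finset.mem_filter, Finset.mem_sigma, Finset.mem_range, Finset.mem_range]

lemma adjSwap_new {j a b : ℕ} (h1 : ¬ b < a) (h2 : adjSwap j b < adjSwap j a) (hne : a ≠ b) :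
    a = j ∧ b = j + 1 := by
  unfold adjSwap at h2
  simp only [Equiv.swap_apply_def] at h2
  split_ifs at h2 <;> omega

lemma invSet_step (n j : ℕ) (w : Equiv.Perm ℕ) :
    (invSet n (adjSwap j * w)).card ≤ (invSet n w).card + 1 := by
  have : invSet n (adjSwap j * w) ⊆
      insert ⟨w.symm (j + 1) - 1, w.symm j - 1⟩ (invSet n w) := by
    rintro ⟨q, p⟩ h
    simp only [mem_invSet, Finset.mem_insert,
      Equiv.Perm.mul_apply] at h ⊢
    by_cases h1 : w (q + 1) < w (p + 1)
    · exact Or.inr ⟨h.1, h1⟩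
    · left
      have hne : w (p + 1) ≠ w (q + 1) := fun e => by
        have := w.injective e
        omega
      obtain ⟨e1, e2⟩ := adjSwap_new h1 h.2 hne
      rw [← e2, ← e1]
      simp
  exact (Finset.card_le_card this).trans (Finset.card_insert_le _ _)

lemma invSet_step_up (n j : ℕ) (w : Equiv.Perm ℕ) (hw : w n = j) :
    (invSet n (adjSwap j * w)).card ≤ (invSet n w).card := by
  apply Finset.card_le_card
  rintro ⟨q, p⟩ h
  simp only [mem_invSet,
      Equiv.Perm.mul_apply] at h ⊢
  refine ⟨h.1, ?_⟩
  by_contra h1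
  have hne : w (p + 1) ≠ w (q + 1) := fun e => by
    have := w.injective e
    omega
  obtain ⟨e1, e2⟩ := adjSwap_new h1 h.2 hne
  have := w.injective (e1.trans hw.symm)
  omega

/-- for a reduced word `(i 1, …, i N)`, `N = n(n-1)/2`, of the longest
element `w₀` of `Sₙ`, with greedy indices `t 1 < ⋯ < t (n-1)` for the pattern
`(n-1, n-2, …, 1)`, and with `W m = s_{i m} ∘ ⋯ ∘ s_{i 1}` (applying `s_{i 1}` first,
`W 0 = id`), one has `W (t k - 1) n = n - k + 1` for all `1 ≤ k ≤ n-1`. -/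
theorem greedy_crossings_on_wire_n
    (n N : ℕ) (hn : 2 ≤ n) (hN : N = n * (n - 1) / 2)
    (i : ℕ → ℕ) (hi : ∀ t ∈ Finset.Icc 1 N, 1 ≤ i t ∧ i t ≤ n - 1)
    (hword : ∀ j ∈ Finset.Icc 1 n,
      (((List.range N).map fun t => adjSwap (i (t + 1))).prod : Equiv.Perm ℕ) j
        = n + 1 - j)
    (t : ℕ → ℕ)
    (ht_range : ∀ k ∈ Finset.Icc 1 (n - 1), t k ∈ Finset.Icc 1 N)
    (ht_letter : ∀ k ∈ Finset.Icc 1 (n - 1), i (t k) = n - k)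
    (ht_mono : ∀ k, 1 ≤ k → k + 1 ≤ n - 1 → t k < t (k + 1))
    (ht_min1 : ∀ r ∈ Finset.Icc 1 N, r < t 1 → i r ≠ n - 1)
    (ht_min : ∀ k, 2 ≤ k → k ≤ n - 1 →
      ∀ r ∈ Finset.Icc 1 N, t (k - 1) < r → r < t k → i r ≠ n - k)
    (W : ℕ → Equiv.Perm ℕ) (hW0 : W 0 = 1)
    (hWs : ∀ m, W (m + 1) = adjSwap (i (m + 1)) * W m) :
    ∀ k ∈ Finset.Icc 1 (n - 1), W (t k - 1) n = n - k + 1 := by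
  have hinv : ∀ m, (((List.range m).map fun t => adjSwap (i (t + 1))).prod : Equiv.Perm ℕ)
      * W m = 1 := by
    intro m
    induction m with
    | zero => simp [hW0]
    | succ m ih =>
      rw [List.range_succ, List.map_append, List.prod_append, hWs]
      have : adjSwap (i (m + 1)) * adjSwap (i (m + 1)) = 1 := by
        simp [adjSwap]
      simp only [List.map_cons, List.map_nil, List.prod_cons, List.prod_nil, mul_one]
      rw [mul_assoc, ← mul_assoc (adjSwap _) (adjSwap _), this, one_mul, ih]
  have hWN : ∀ j ∈ Finset.Icc 1 n, W N (n + 1 - j) = j := by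
    intro j hj
    rw [← hword j hj]
    have h2 := mul_eq_one_comm.mp (hinv N)
    have := congrArg (fun f : Equiv.Perm ℕ => f j) h2
    simpa using this
  have hWN' : ∀ j, 1 ≤ j → j ≤ n → W N j = n + 1 - j := by
    intro j h1 h2
    have := hWN (n + 1 - j) (by simp; omega)
    rwa [show n + 1 - (n + 1 - j) = j by omega] at this
  have hcardN : (invSet n (W N)).card = N := by
    have : invSet n (W N) = (Finset.range n).sigma fun q => Finset.range q := by
      apply Finset.filter_true_of_mem
      rintro ⟨q, p⟩ h
      simp only [Finset.mem_sigma, Finset.mem_range] at h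
      simp only
      rw [hWN' _ (by omega) (by omega), hWN' _ (by omega) (by omega)]
      omega
    rw [this, Finset.card_sigma, hN]
    simp [Finset.sum_range_id]
  have hcard0 : (invSet n (W 0)).card = 0 := by
    rw [Finset.card_eq_zero]
    apply Finset.filter_false_of_mem
    rintro ⟨q, p⟩ h
    simp only [Finset.mem_sigma, Finset.mem_range] at h
    simp only [hW0, Equiv.Perm.one_apply]
    omega
  have hgrow : ∀ d m, (invSet n (W (m + d))).card ≤ (invSet n (W m)).card + d := by
    intro d m
    induction d with
    | zero => simp
    | succ d ih =>
      have := invSet_step n (i (m + d + 1)) (W (m + d))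
      rw [← hWs] at this
      rw [← add_assoc]
      omega
  have hup : ∀ m, m + 1 ≤ N → W m n ≠ i (m + 1) := by
    intro m hm he
    have h1 := invSet_step_up n _ (W m) he
    rw [← hWs] at h1
    have h2 := hgrow (N - (m + 1)) (m + 1)
    rw [show m + 1 + (N - (m + 1)) = N by omega, hcardN] at h2
    have h3 := hgrow m 0
    rw [hcard0, Nat.zero_add] at h3
    omega
  have hstay : ∀ a L, W a n = L → ∀ d, a + d ≤ N →
      (∀ r, a < r → r ≤ a + d → i r + 1 ≠ L) → W (a + d) n = L := by
    intro a L hL d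
    induction d with
    | zero => intro _ _; exact hL
    | succ d ih =>
      intro hd hr
      have h1 := ih (by omega) (fun r h1 h2 => hr r h1 (by omega))
      have h2 := hup (a + d) (by omega)
      have h3 := hr (a + d + 1) (by omega) (by omega)
      rw [← add_assoc, hWs, Equiv.Perm.mul_apply, h1]
      rw [h1] at h2
      exact Equiv.swap_apply_of_ne_of_ne h2 (Ne.symm h3)
  intro k hk
  rw [Finset.mem_Icc] at hk
  obtain ⟨hk1, hk2⟩ := hk
  induction k, hk1 using Nat.le_induction with
  | base =>
    have hr := ht_range 1 (by simp; omega)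
    rw [Finset.mem_Icc] at hr
    have := hstay 0 n (by simp [hW0]) (t 1 - 1) (by omega) (fun r h1 h2 => by
      have := ht_min1 r (by simp; omega) (by omega)
      omega)
    rw [Nat.zero_add] at this
    omega
  | succ k hk ih =>
    have ih := ih (by omega)
    have hr := ht_range k (by simp; omega)
    have hr' := ht_range (k + 1) (by simp; omega)
    rw [Finset.mem_Icc] at hr hr'
    have hm := ht_mono k hk hk2
    have hl := ht_letter k (by simp; omega)
    have hs : W (t k) n = n - k := by
      have h := hWs (t k - 1)
      rw [show t k - 1 + 1 = t k by omega] at h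
      rw [h, Equiv.Perm.mul_apply, ih, hl]
      exact Equiv.swap_apply_right _ _
    have := hstay (t k) (n - k) hs (t (k + 1) - 1 - t k) (by omega) (fun r h1 h2 => by
      have := ht_min (k + 1) (by omega) hk2 r (by simp; omega) (by simpa using h1) (by omega)
      omega)
    rw [show t k + (t (k + 1) - 1 - t k) = t (k + 1) - 1 by omega] at this
    omega
end

section
/- Let n ≥ 2 and let (i_1,…,i_N), N = n(n−1)/2, be a reduced word for the longest element w_0 of S_n, with greedy indices t_1 < ⋯ < t_{n−1} for the pattern (1,2,…,n−1) (t_1 minimal with i_{t_1} = 1; t_k minimal with t_k > t_{k−1} and i_{t_k} = k). Set w^{(t)} := s_{i_t} ∘ ⋯ ∘ s_{i_1} and define j_k := (w^{(t_k − 1)})^{-1}(k+1) for 1 ≤ k ≤ n−1, i.e. j_k is the label of the wire crossing wire ℓ_1 at the greedy crossing t_k. Then j_1, …, j_{n−1} are pairwise distinct and {j_1, …, j_{n−1}} = {2, 3, …, n}. -/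
theorem aux_card (n : ℕ) : ((Finset.Icc 1 n).sigma (fun q => Finset.Ico 1 q)).card
    = n * (n - 1) / 2 := by
  rw [Finset.card_sigma]
  simp only [Nat.card_Ico]
  rw [← Finset.sum_range_id]
  induction n with
  | zero => simp
  | succ k ih => rw [Finset.sum_Icc_succ_top (by omega), ih, Finset.sum_range_succ]; simp

theorem aux_flip (j a b : ℕ) (hab : a < b) (h : adjSwap j b ≤ adjSwap j a) :
    a = j ∧ b = j + 1 := by
  unfold adjSwap at h
  simp only [Equiv.swap_apply_def] at h
  split_ifs at h <;> omega

theorem aux_prod (i : ℕ → ℕ) (W : ℕ → Equiv.Perm ℕ) (hW0 : W 0 = 1)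
    (hWs : ∀ m, W (m + 1) = adjSwap (i (m + 1)) * W m) (m : ℕ) :
    (((List.range m).map fun t => adjSwap (i (t + 1))).prod : Equiv.Perm ℕ) = (W m)⁻¹ := by
  induction m with
  | zero => simp [hW0]
  | succ k ih =>
    rw [List.range_succ, List.map_append, List.prod_append, ih, hWs, mul_inv_rev]
    simp [adjSwap, Equiv.swap_inv]

/-- for a reduced word `(i 1, …, i N)`, `N = n(n-1)/2`, of the longest
element `w₀` of `Sₙ`, with greedy indices `t 1 < ⋯ < t (n-1)` for the pattern
`(1, 2, …, n-1)`, setting `W m = s_{i m} ∘ ⋯ ∘ s_{i 1}` and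
`j_k = (W (t k - 1))⁻¹ (k + 1)` (the label of the wire crossing wire `ℓ₁` at the
greedy crossing `t k`), the `j_k` are pairwise distinct and
`{j_1, …, j_{n-1}} = {2, 3, …, n}`. -/
theorem greedy_crossing_partners_wire_one
    (n N : ℕ) (hn : 2 ≤ n) (hN : N = n * (n - 1) / 2)
    (i : ℕ → ℕ) (hi : ∀ t ∈ Finset.Icc 1 N, 1 ≤ i t ∧ i t ≤ n - 1)
    (hword : ∀ j ∈ Finset.Icc 1 n,
      (((List.range N).map fun t => adjSwap (i (t + 1))).prod : Equiv.Perm ℕ) j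
        = n + 1 - j)
    (t : ℕ → ℕ)
    (ht_range : ∀ k ∈ Finset.Icc 1 (n - 1), t k ∈ Finset.Icc 1 N)
    (ht_letter : ∀ k ∈ Finset.Icc 1 (n - 1), i (t k) = k)
    (ht_mono : ∀ k, 1 ≤ k → k + 1 ≤ n - 1 → t k < t (k + 1))
    (ht_min1 : ∀ r ∈ Finset.Icc 1 N, r < t 1 → i r ≠ 1)
    (ht_min : ∀ k, 2 ≤ k → k ≤ n - 1 →
      ∀ r ∈ Finset.Icc 1 N, t (k - 1) < r → r < t k → i r ≠ k)
    (W : ℕ → Equiv.Perm ℕ) (hW0 : W 0 = 1)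
    (hWs : ∀ m, W (m + 1) = adjSwap (i (m + 1)) * W m) :
    Set.InjOn (fun k => ((W (t k - 1))⁻¹ : Equiv.Perm ℕ) (k + 1)) (Set.Icc 1 (n - 1)) ∧
    (fun k => ((W (t k - 1))⁻¹ : Equiv.Perm ℕ) (k + 1)) '' Set.Icc 1 (n - 1)
      = Set.Icc 2 n := by
  set f : ℕ → (Σ _ : ℕ, ℕ) := fun r =>
    ⟨(W (r - 1))⁻¹ (i r + 1), (W (r - 1))⁻¹ (i r)⟩ with hf
  set P := (Finset.Icc 1 n).sigma (fun q => Finset.Ico 1 q) with hP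
  have hPc : P.card = N := by rw [hN]; exact aux_card n
  have hWN : ∀ p, 1 ≤ p → p ≤ n → W N p = n + 1 - p := by
    intro p h1 h2
    have h := hword (n + 1 - p) (Finset.mem_Icc.2 ⟨by omega, by omega⟩)
    rw [aux_prod i W hW0 hWs, Equiv.Perm.inv_eq_iff_eq] at h
    rw [h]
    congr 1
    omega
  have hsub : P ⊆ (Finset.Icc 1 N).image f := by
    rintro ⟨q, p⟩ hqp
    rw [hP, Finset.mem_sigma, Finset.mem_Icc, Finset.mem_Ico] at hqp
    obtain ⟨⟨hq1, hqn⟩, hp1, hpq⟩ := hqp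
    dsimp only at hq1 hqn hp1 hpq
    have hex : ∃ r, W r q ≤ W r p ∧ r ≤ N := ⟨N, by
      rw [hWN q hq1 hqn, hWN p hp1 (by omega)]; omega, le_rfl⟩
    classical
    obtain ⟨hr1, hr2⟩ := Nat.find_spec hex
    have hmin := fun m => @Nat.find_min _ _ hex m
    generalize Nat.find hex = r at hr1 hr2 hmin
    cases r with
    | zero => simp [hW0] at hr1; omega
    | succ m =>
      have hm := hmin m (by omega)
      have hlt : W m p < W m q := by
        by_contra hc
        exact hm ⟨by omega, by omega⟩
      rw [hWs] at hr1
      obtain ⟨ha, hb⟩ := aux_flip _ _ _ hlt hr1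
      refine Finset.mem_image.2 ⟨m + 1, Finset.mem_Icc.2 ⟨by omega, hr2⟩, ?_⟩
      simp only [hf, Nat.add_sub_cancel]
      rw [← hb, ← ha]
      simp
  have hcard : ((Finset.Icc 1 N).image f).card ≤ (Finset.Icc 1 N).card := Finset.card_image_le
  have hIcc : (Finset.Icc 1 N).card = N := by simp
  have heq : P = (Finset.Icc 1 N).image f :=
    Finset.eq_of_subset_of_card_le hsub (by omega)
  have hinj : Set.InjOn f (Finset.Icc 1 N) := by
    apply Finset.card_image_iff.1
    rw [← heq, hPc, hIcc]
  have hmem : ∀ r, 1 ≤ r → r ≤ N → 1 ≤ (W (r - 1))⁻¹ (i r) ∧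
      (W (r - 1))⁻¹ (i r) < (W (r - 1))⁻¹ (i r + 1) ∧ (W (r - 1))⁻¹ (i r + 1) ≤ n := by
    intro r h1 h2
    have h : f r ∈ P := by
      rw [heq]; exact Finset.mem_image_of_mem _ (Finset.mem_Icc.2 ⟨h1, h2⟩)
    rw [hP, Finset.mem_sigma, Finset.mem_Icc, Finset.mem_Ico] at h
    simp only [hf] at h
    omega
  have hstep : ∀ k r, W r 1 = k → r + 1 ≤ N → i (r + 1) ≠ k → W (r + 1) 1 = k := by
    intro k r h1 h2 h3
    rw [hWs, Equiv.Perm.mul_apply, h1, adjSwap]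
    apply Equiv.swap_apply_of_ne_of_ne (Ne.symm h3)
    intro hk
    have h := hmem (r + 1) (by omega) h2
    have hv : (W r)⁻¹ (W r 1) = 1 := by simp
    rw [Nat.add_sub_cancel, ← hk, ← h1, hv] at h
    omega
  have hrun : ∀ k a b, W a 1 = k → b ≤ N → (∀ r, a < r → r ≤ b → i r ≠ k) → a ≤ b →
      W b 1 = k := by
    intro k a b h1 h2 h3 h4
    induction b, h4 using Nat.le_induction with
    | base => exact h1
    | succ b hb ih =>
      exact hstep k b (ih (by omega) (fun r hr hr' => h3 r hr (by omega))) h2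
        (h3 _ (by omega) le_rfl)
  have hR : ∀ k, 1 ≤ k → k ≤ n - 1 → 1 ≤ t k ∧ t k ≤ N := fun k h1 h2 =>
    Finset.mem_Icc.1 (ht_range k (Finset.mem_Icc.2 ⟨h1, h2⟩))
  have hL : ∀ k, 1 ≤ k → k ≤ n - 1 → i (t k) = k := fun k h1 h2 =>
    ht_letter k (Finset.mem_Icc.2 ⟨h1, h2⟩)
  have hone : ∀ k, 1 ≤ k → k ≤ n - 1 → W (t k - 1) 1 = k := by
    intro k hk
    induction k, hk using Nat.le_induction with
    | base =>
      intro h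
      have := hR 1 le_rfl h
      refine hrun 1 0 _ (by simp [hW0]) (by omega) ?_ (by omega)
      intro r h1 h2
      exact ht_min1 r (Finset.mem_Icc.2 ⟨by omega, by omega⟩) (by omega)
    | succ k hk ih =>
      intro h
      have h0 := hR k hk (by omega)
      have h1 := hR (k + 1) (by omega) h
      have hlt := ht_mono k hk h
      refine hrun (k + 1) (t k) _ ?_ (by omega) ?_ (by omega)
      · have e := hWs (t k - 1)
        rw [Nat.sub_add_cancel h0.1, hL k hk (by omega)] at e
        rw [e, Equiv.Perm.mul_apply, ih (by omega), adjSwap, Equiv.swap_apply_left]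
      · intro r h2 h3
        exact ht_min (k + 1) (by omega) h r (Finset.mem_Icc.2 ⟨by omega, by omega⟩)
          (by simpa using h2) (by omega)
  have hfk : ∀ k, 1 ≤ k → k ≤ n - 1 → f (t k) = ⟨(W (t k - 1))⁻¹ (k + 1), 1⟩ := by
    intro k h1 h2
    have e : (W (t k - 1))⁻¹ k = 1 := by
      rw [Equiv.Perm.inv_eq_iff_eq, hone k h1 h2]
    simp only [hf, hL k h1 h2, e]
  have hI : Set.InjOn (fun k => ((W (t k - 1))⁻¹ : Equiv.Perm ℕ) (k + 1))
      (Set.Icc 1 (n - 1)) := by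
    rintro a ⟨ha1, ha2⟩ b ⟨hb1, hb2⟩ hab
    dsimp only at hab
    have e : f (t a) = f (t b) := by rw [hfk a ha1 ha2, hfk b hb1 hb2, hab]
    have e2 : t a = t b := hinj (by simpa using hR a ha1 ha2) (by simpa using hR b hb1 hb2) e
    rw [← hL a ha1 ha2, ← hL b hb1 hb2, e2]
  refine ⟨hI, ?_⟩
  have hS : (Finset.Icc 1 (n - 1)).image
      (fun k => ((W (t k - 1))⁻¹ : Equiv.Perm ℕ) (k + 1)) = Finset.Icc 2 n := by
    apply Finset.eq_of_subset_of_card_le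
    · intro x hx
      obtain ⟨k, hk, rfl⟩ := Finset.mem_image.1 hx
      obtain ⟨h1, h2⟩ := Finset.mem_Icc.1 hk
      have h := hmem (t k) (hR k h1 h2).1 (hR k h1 h2).2
      rw [hL k h1 h2] at h
      exact Finset.mem_Icc.2 ⟨by omega, h.2.2⟩
    · rw [Finset.card_image_of_injOn (by simpa using hI)]
      simp
  have := congrArg (fun s : Finset ℕ => (s : Set ℕ)) hS
  simpa using this
end

section
/- Let n ≥ 2 and let (i_1,…,i_N), N = n(n−1)/2, be a reduced word for the longest element w_0 of S_n, with greedy indices t_1 < ⋯ < t_{n−1} for the pattern (n−1, n−2, …, 1) (t_1 minimal with i_{t_1} = n−1; t_k minimal with t_k > t_{k−1} and i_{t_k} = n−k). Set w^{(t)} := s_{i_t} ∘ ⋯ ∘ s_{i_1} and define j_k := (w^{(t_k − 1)})^{-1}(n−k) for 1 ≤ k ≤ n−1, i.e. j_k is the label of the wire crossing wire ℓ_n at the greedy crossing t_k. Then j_1, …, j_{n−1} are pairwise distinct and {j_1, …, j_{n−1}} = {1, 2, …, n−1}. -/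
theorem perm_apply_inv (p : Equiv.Perm ℕ) (x : ℕ) : p (p⁻¹ x) = x := p.apply_symm_apply x

theorem perm_inv_apply (p : Equiv.Perm ℕ) (x : ℕ) : p⁻¹ (p x) = x := p.symm_apply_apply x

theorem adjSwap_val (j x : ℕ) :
    adjSwap j x = if x = j then j + 1 else if x = j + 1 then j else x := by
  unfold adjSwap
  rw [Equiv.swap_apply_def]

theorem pairs_card (n : ℕ) :
    ((Finset.range (n + 1)).sigma fun b => Finset.Ico 1 b).card = n * (n - 1) / 2 := by
  rw [Finset.card_sigma, Finset.sum_range_succ', ← Finset.sum_range_id]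
  simp

/-- for a reduced word `(i 1, …, i N)`, `N = n(n-1)/2`, of the longest
element `w₀` of `Sₙ`, with greedy indices `t 1 < ⋯ < t (n-1)` for the pattern
`(n-1, n-2, …, 1)`, setting `W m = s_{i m} ∘ ⋯ ∘ s_{i 1}` and
`j_k = (W (t k - 1))⁻¹ (n - k)` (the label of the wire crossing wire `ℓₙ` at the
greedy crossing `t k`), the `j_k` are pairwise distinct and
`{j_1, …, j_{n-1}} = {1, 2, …, n-1}`. -/
theorem greedy_crossing_partners_wire_n
    (n N : ℕ) (hn : 2 ≤ n) (hN : N = n * (n - 1) / 2)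
    (i : ℕ → ℕ) (hi : ∀ t ∈ Finset.Icc 1 N, 1 ≤ i t ∧ i t ≤ n - 1)
    (hword : ∀ j ∈ Finset.Icc 1 n,
      (((List.range N).map fun t => adjSwap (i (t + 1))).prod : Equiv.Perm ℕ) j
        = n + 1 - j)
    (t : ℕ → ℕ)
    (ht_range : ∀ k ∈ Finset.Icc 1 (n - 1), t k ∈ Finset.Icc 1 N)
    (ht_letter : ∀ k ∈ Finset.Icc 1 (n - 1), i (t k) = n - k)
    (ht_mono : ∀ k, 1 ≤ k → k + 1 ≤ n - 1 → t k < t (k + 1))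
    (ht_min1 : ∀ r ∈ Finset.Icc 1 N, r < t 1 → i r ≠ n - 1)
    (ht_min : ∀ k, 2 ≤ k → k ≤ n - 1 →
      ∀ r ∈ Finset.Icc 1 N, t (k - 1) < r → r < t k → i r ≠ n - k)
    (W : ℕ → Equiv.Perm ℕ) (hW0 : W 0 = 1)
    (hWs : ∀ m, W (m + 1) = adjSwap (i (m + 1)) * W m) :
    Set.InjOn (fun k => ((W (t k - 1))⁻¹ : Equiv.Perm ℕ) (n - k)) (Set.Icc 1 (n - 1)) ∧
    (fun k => ((W (t k - 1))⁻¹ : Equiv.Perm ℕ) (n - k)) '' Set.Icc 1 (n - 1)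
      = Set.Icc 1 (n - 1) := by
  have hval : ∀ m x, W (m + 1) x = if W m x = i (m + 1) then i (m + 1) + 1
      else if W m x = i (m + 1) + 1 then i (m + 1) else W m x := by
    intro m x
    rw [hWs, Equiv.Perm.mul_apply, adjSwap_val]
  have hinvprod : ∀ m, W m * (((List.range m).map fun t => adjSwap (i (t + 1))).prod) = 1 := by
    intro m
    induction m with
    | zero => simp [hW0]
    | succ m ih =>
      rw [List.range_succ, List.map_append, List.prod_append, hWs]
      have h2 : adjSwap (i (m + 1)) * adjSwap (i (m + 1)) = 1 := by
        unfold adjSwap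
        exact Equiv.swap_mul_self _ _
      calc _ = adjSwap (i (m + 1)) * (W m * (((List.range m).map fun t => adjSwap (i (t + 1))).prod)) * adjSwap (i (m + 1)) := by
            simp [mul_assoc]
        _ = 1 := by rw [ih, mul_one, h2]
  have hWN : ∀ a, 1 ≤ a → a ≤ n → W N a = n + 1 - a := by
    intro a h1 h2
    have h := hword (n + 1 - a) (Finset.mem_Icc.2 ⟨by omega, by omega⟩)
    have h' := congrArg (fun p : Equiv.Perm ℕ => p (n + 1 - a)) (hinvprod N)
    simp only [Equiv.Perm.mul_apply, Equiv.Perm.one_apply] at h'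
    rw [h] at h'
    rwa [show n + 1 - (n + 1 - a) = a by omega] at h'
  have hpres : ∀ m, m ≤ N → ∀ a, (1 ≤ W m a ∧ W m a ≤ n) ↔ (1 ≤ a ∧ a ≤ n) := by
    intro m
    induction m with
    | zero => intro _ a; simp [hW0]
    | succ m ih =>
      intro hm a
      rw [← ih (by omega) a, hval]
      have := hi (m + 1) (Finset.mem_Icc.2 ⟨by omega, hm⟩)
      split_ifs <;> omega
  -- inversion sets
  let I : ℕ → Finset (Σ _ : ℕ, ℕ) := fun m =>
    ((Finset.range (n + 1)).sigma fun b => Finset.Ico 1 b).filter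
      (fun p => W m p.1 < W m p.2)
  let P : ℕ → (Σ _ : ℕ, ℕ) := fun m =>
    ⟨(W m)⁻¹ (i (m + 1) + 1), (W m)⁻¹ (i (m + 1))⟩
  have hsub : ∀ m, I (m + 1) ⊆ insert (P m) (I m) := by
    rintro m ⟨b, a⟩ hp
    simp only [I, Finset.mem_filter, Finset.mem_insert] at hp ⊢
    obtain ⟨hp1, hp2⟩ := hp
    by_cases hlt : W m b < W m a
    · exact Or.inr ⟨hp1, hlt⟩
    · left
      have hab : a < b := by
        simp only [Finset.mem_sigma, Finset.mem_Ico] at hp1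
        exact hp1.2.2
      have hne : W m a ≠ W m b := fun h => by
        have := (W m).injective h
        omega
      have : W m a = i (m + 1) ∧ W m b = i (m + 1) + 1 := by
        rw [hval, hval] at hp2
        split_ifs at hp2 <;> omega
      simp only [P]
      rw [← this.2, ← this.1]
      simp only [perm_inv_apply]
  have hcard : ∀ m, (I (m + 1)).card ≤ (I m).card + 1 := fun m =>
    (Finset.card_le_card (hsub m)).trans (Finset.card_insert_le _ _)
  have hlow : ∀ m, (I m).card ≤ m := by
    intro m
    induction m with
    | zero =>
      have : I 0 = ∅ := by
        rw [Finset.eq_empty_iff_forall_notMem]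
        rintro ⟨b, a⟩ hp
        simp [I, hW0] at hp
        omega
      simp [this]
    | succ m ih => have := hcard m; omega
  have hup : ∀ d m, (I (m + d)).card ≤ (I m).card + d := by
    intro d m
    induction d with
    | zero => simp
    | succ d ih => have := hcard (m + d); rw [← add_assoc]; omega
  have hIN : (I N).card = N := by
    have : I N = (Finset.range (n + 1)).sigma fun b => Finset.Ico 1 b := by
      apply Finset.filter_true_of_mem
      rintro ⟨b, a⟩ hp
      simp only [Finset.mem_sigma, Finset.mem_Ico, Finset.mem_range] at hp ⊢
      rw [hWN a (by omega) (by omega), hWN b (by omega) (by omega)]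
      omega
    rw [this, pairs_card, hN]
  have hkey : ∀ m, m < N → (W m)⁻¹ (i (m + 1)) < (W m)⁻¹ (i (m + 1) + 1) := by
    intro m hm
    by_contra hcon
    have hne : (W m)⁻¹ (i (m + 1)) ≠ (W m)⁻¹ (i (m + 1) + 1) := fun h => by
      have := ((W m)⁻¹).injective h
      omega
    have hnot : I (m + 1) ⊆ I m := by
      intro p hp
      rcases Finset.mem_insert.1 (hsub m hp) with h | h
      · exfalso
        rw [h] at hp
        simp only [I, P, Finset.mem_filter, Finset.mem_sigma, Finset.mem_Ico] at hp
        omega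
      · exact h
    have h1 := Finset.card_le_card hnot
    have h2 := hlow m
    have h3 := hup (N - (m + 1)) (m + 1)
    rw [show m + 1 + (N - (m + 1)) = N by omega, hIN] at h3
    omega
  have hpersist1 : ∀ m, m < N → ∀ a b, a < b → W m b < W m a → W (m + 1) b < W (m + 1) a := by
    intro m hm a b hab h
    have hk := hkey m hm
    have : ¬ (W m b = i (m + 1) ∧ W m a = i (m + 1) + 1) := by
      rintro ⟨h1, h2⟩
      rw [← h2, ← h1] at hk
      simp only [perm_inv_apply] at hk
      omega
    rw [hval, hval]
    split_ifs <;> omega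
  have hpersist : ∀ d m, m + d ≤ N → ∀ a b, a < b → W m b < W m a →
      W (m + d) b < W (m + d) a := by
    intro d m
    induction d with
    | zero => intro _ a b _ h; exact h
    | succ d ih =>
      intro hd a b hab h
      exact hpersist1 (m + d) (by omega) a b hab (ih (by omega) a b hab h)
  -- wire n never moves up
  have hnoup : ∀ m, m < N → i (m + 1) ≠ W m n := by
    intro m hm h
    have hk := hkey m hm
    have hb := (hpres m hm.le ((W m)⁻¹ (i (m + 1) + 1))).1 (by
      have := hi (m + 1) (Finset.mem_Icc.2 ⟨by omega, hm⟩)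
      rw [perm_apply_inv]
      omega)
    rw [h, perm_inv_apply, ← h] at hk
    omega
  have hstay : ∀ m x, W m n = x + 1 → ∀ d, m + d ≤ N →
      (∀ r, m < r → r ≤ m + d → i r ≠ x) → W (m + d) n = x + 1 := by
    intro m x hx d
    induction d with
    | zero => intro _ _; exact hx
    | succ d ih =>
      intro hd hr
      have h1 := ih (by omega) (fun r h1 h2 => hr r h1 (by omega))
      have h2 := hnoup (m + d) (by omega)
      have h3 := hr (m + d + 1) (by omega) (by omega)
      rw [← add_assoc, hval]
      split_ifs <;> omega
  have hwire : ∀ k, 1 ≤ k → k ≤ n - 1 → W (t k - 1) n = n - k + 1 := by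
    intro k hk
    induction k, hk using Nat.le_induction with
    | base =>
      intro _
      have ht := Finset.mem_Icc.1 (ht_range 1 (Finset.mem_Icc.2 ⟨le_refl _, by omega⟩))
      have := hstay 0 (n - 1) (by rw [hW0, Equiv.Perm.one_apply]; omega) (t 1 - 1) (by omega)
        (fun r h1 h2 => ht_min1 r (Finset.mem_Icc.2 ⟨by omega, by omega⟩) (by omega))
      rwa [zero_add] at this
    | succ k hk ih =>
      intro hk1
      have h0 := ih (by omega)
      have ht := Finset.mem_Icc.1 (ht_range k (Finset.mem_Icc.2 ⟨by omega, by omega⟩))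
      have ht' := Finset.mem_Icc.1 (ht_range (k + 1) (Finset.mem_Icc.2 ⟨by omega, by omega⟩))
      have hl := ht_letter k (Finset.mem_Icc.2 ⟨by omega, by omega⟩)
      have hm := ht_mono k hk hk1
      have hv := hval (t k - 1) n
      rw [show t k - 1 + 1 = t k by omega, h0, hl] at hv
      have hx : W (t k) n = (n - (k + 1)) + 1 := by
        rw [hv]
        split_ifs <;> omega
      have := hstay (t k) (n - (k + 1)) hx (t (k + 1) - 1 - t k) (by omega)
        (fun r h1 h2 => ht_min (k + 1) (by omega) hk1 r
          (Finset.mem_Icc.2 ⟨by omega, by omega⟩) (by simpa using h1) (by omega))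
      rwa [show t k + (t (k + 1) - 1 - t k) = t (k + 1) - 1 by omega] at this
  have htlt : ∀ k l, 1 ≤ k → k < l → l ≤ n - 1 → t k < t l := by
    intro k l hk hkl
    induction l, hkl using Nat.le_induction with
    | base => intro h; exact ht_mono k hk h
    | succ l hl ih =>
      intro h
      exact (ih (by omega)).trans (ht_mono l (by have : k + 1 ≤ l := hl
                                                 omega) h)
  have hmaps : ∀ k, 1 ≤ k → k ≤ n - 1 → 1 ≤ (W (t k - 1))⁻¹ (n - k) ∧
      (W (t k - 1))⁻¹ (n - k) ≤ n - 1 := by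
    intro k h1 h2
    have ht := Finset.mem_Icc.1 (ht_range k (Finset.mem_Icc.2 ⟨h1, h2⟩))
    have hb := (hpres (t k - 1) (by omega) ((W (t k - 1))⁻¹ (n - k))).1 (by
      rw [perm_apply_inv]; omega)
    have hne : (W (t k - 1))⁻¹ (n - k) ≠ n := by
      intro h
      have h3 := hwire k h1 h2
      rw [← h, perm_apply_inv] at h3
      omega
    omega
  have hdist : ∀ k l, 1 ≤ k → k < l → l ≤ n - 1 →
      (W (t k - 1))⁻¹ (n - k) ≠ (W (t l - 1))⁻¹ (n - l) := by
    intro k l hk hkl hl h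
    have ht := Finset.mem_Icc.1 (ht_range k (Finset.mem_Icc.2 ⟨hk, by omega⟩))
    have ht' := Finset.mem_Icc.1 (ht_range l (Finset.mem_Icc.2 ⟨by omega, hl⟩))
    have hlt := htlt k l hk hkl hl
    have hj := hmaps k hk (by omega)
    have hwk := hwire k hk (by omega)
    have hwl := hwire l (by omega) hl
    have hle := ht_letter k (Finset.mem_Icc.2 ⟨hk, by omega⟩)
    have e1 : W (t k - 1) ((W (t k - 1))⁻¹ (n - k)) = n - k := perm_apply_inv _ _
    have e2 : W (t l - 1) ((W (t l - 1))⁻¹ (n - l)) = n - l := perm_apply_inv _ _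
    rw [← h] at e2
    generalize (W (t k - 1))⁻¹ (n - k) = j at *
    have v1 := hval (t k - 1) j
    have v2 := hval (t k - 1) n
    rw [show t k - 1 + 1 = t k by omega, e1, hle, if_pos rfl] at v1
    rw [show t k - 1 + 1 = t k by omega, hwk, hle, if_neg (by omega), if_pos rfl] at v2
    have hp := hpersist (t l - 1 - t k) (t k) (by omega) j n (by omega) (by omega)
    rw [show t k + (t l - 1 - t k) = t l - 1 by omega] at hp
    omega
  have hinj : Set.InjOn (fun k => ((W (t k - 1))⁻¹ : Equiv.Perm ℕ) (n - k))
      (Set.Icc 1 (n - 1)) := by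
    intro k hk l hl h
    simp only [Set.mem_Icc] at hk hl
    rcases lt_trichotomy k l with hlt | heq | hlt
    · exact absurd h (hdist k l hk.1 hlt hl.2)
    · exact heq
    · exact absurd h.symm (hdist l k hl.1 hlt hk.2)
  refine ⟨hinj, ?_⟩
  apply Set.eq_of_subset_of_ncard_le
  · rintro _ ⟨k, hk, rfl⟩
    exact hmaps k hk.1 hk.2
  · rw [hinj.ncard_image]
  · exact Set.finite_Icc _ _
end

section
/- Let n ≥ 3 and let (i_1,…,i_N), N = n(n−1)/2, be a reduced word for the longest element w_0 of S_n, with greedy indices t_1 < ⋯ < t_{n−1} for the pattern (1,2,…,n−1) (t_1 minimal with i_{t_1} = 1; t_k minimal with t_k > t_{k−1} and i_{t_k} = k). Define z ∈ {0,1}^N by z_r = 1 if r ∈ {t_1,…,t_{n−1}} and z_r = 0 otherwise. Then z satisfies Littelmann's string inequalities for the highest root θ: for every 1 ≤ r ≤ N, z_r ≤ ⟨θ − Σ_{r<j≤N} z_j α_{i_j}, α^∨_{i_r}⟩. -/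
/-- The type `A` Cartan pairing `⟨α_p, α_q^∨⟩`: `2` if `p = q`, `-1` if `|p - q| = 1`,
and `0` otherwise. -/
def cartan (p q : ℕ) : ℤ :=
  if p = q then 2 else if p + 1 = q ∨ q + 1 = p then -1 else 0

/-- The pairing `⟨θ, α_p^∨⟩` of the highest root `θ = α_1 + ⋯ + α_{n-1}` of `sl_n`
(`n ≥ 3`) with the simple coroots: `1` if `p ∈ {1, n-1}`, `0` otherwise. -/
def thetaPair (n p : ℕ) : ℤ := if p = 1 ∨ p = n - 1 then 1 else 0

/-- for a reduced word `(i 1, …, i N)`, `N = n(n-1)/2`, of the longest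
element `w₀` of `Sₙ` (`n ≥ 3`), the indicator vector `z` of the greedy indices
`t 1 < ⋯ < t (n-1)` for the pattern `(1, 2, …, n-1)` satisfies Littelmann's string
inequalities for the highest root `θ`:
`z r ≤ ⟨θ - Σ_{r < j ≤ N} z j • α_{i j}, α_{i r}^∨⟩` for every `1 ≤ r ≤ N`. -/
theorem greedy_indicator_satisfies_string_inequalities_theta_one
    (n N : ℕ) (hn : 3 ≤ n) (hN : N = n * (n - 1) / 2)
    (i : ℕ → ℕ) (hi : ∀ t ∈ Finset.Icc 1 N, 1 ≤ i t ∧ i t ≤ n - 1)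
    (hword : ∀ j ∈ Finset.Icc 1 n,
      (((List.range N).map fun t => adjSwap (i (t + 1))).prod : Equiv.Perm ℕ) j
        = n + 1 - j)
    (t : ℕ → ℕ)
    (ht_range : ∀ k ∈ Finset.Icc 1 (n - 1), t k ∈ Finset.Icc 1 N)
    (ht_letter : ∀ k ∈ Finset.Icc 1 (n - 1), i (t k) = k)
    (ht_mono : ∀ k, 1 ≤ k → k + 1 ≤ n - 1 → t k < t (k + 1))
    (ht_min1 : ∀ r ∈ Finset.Icc 1 N, r < t 1 → i r ≠ 1)
    (ht_min : ∀ k, 2 ≤ k → k ≤ n - 1 →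
      ∀ r ∈ Finset.Icc 1 N, t (k - 1) < r → r < t k → i r ≠ k)
    (z : ℕ → ℤ)
    (hz : ∀ r, z r = if r ∈ (Finset.Icc 1 (n - 1)).image t then 1 else 0) :
    ∀ r ∈ Finset.Icc 1 N,
      z r ≤ thetaPair n (i r) - ∑ j ∈ Finset.Icc (r + 1) N, z j * cartan (i j) (i r) := by
  intro r hr
  have hp := hi r hr
  have key : ∑ j ∈ Finset.Icc (r + 1) N, z j * cartan (i j) (i r)
      = ∑ k ∈ Finset.Icc 1 (n - 1), if r < t k then cartan k (i r) else 0 := by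
    have h1 : ∀ j ∈ Finset.Icc (r + 1) N, z j * cartan (i j) (i r)
        = ∑ k ∈ Finset.Icc 1 (n - 1), if t k = j then cartan k (i r) else 0 := by
      intro j _
      rw [hz j]
      by_cases hj : j ∈ (Finset.Icc 1 (n - 1)).image t
      · rw [if_pos hj]
        obtain ⟨k, hk, rfl⟩ := Finset.mem_image.1 hj
        rw [Finset.sum_eq_single_of_mem k hk]
        · simp [ht_letter k hk]
        · intro l hl hlk
          rw [if_neg]
          intro h
          apply hlk
          rw [← ht_letter l hl, ← ht_letter k hk, h]
      · rw [if_neg hj, zero_mul, Finset.sum_eq_zero]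
        intro k hk
        rw [if_neg]
        intro h
        exact hj (Finset.mem_image.2 ⟨k, hk, h⟩)
    rw [Finset.sum_congr rfl h1, Finset.sum_comm]
    apply Finset.sum_congr rfl
    intro k hk
    have := Finset.mem_Icc.1 (ht_range k hk)
    rw [Finset.sum_ite_eq]
    by_cases h : r < t k
    · rw [if_pos h, if_pos (Finset.mem_Icc.2 ⟨h, this.2⟩)]
    · rw [if_neg h, if_neg]
      intro h'
      exact h (Finset.mem_Icc.1 h').1
  have key2 : ∀ k ∈ Finset.Icc 1 (n - 1), (if r < t k then cartan k (i r) else 0)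
      = (if k = i r then (if r < t k then (2 : ℤ) else 0) else 0)
        + (if k = i r - 1 then (if r < t k then (-1 : ℤ) else 0) else 0)
        + (if k = i r + 1 then (if r < t k then (-1 : ℤ) else 0) else 0) := by
    intro k _
    unfold cartan
    split_ifs <;> omega
  rw [key, Finset.sum_congr rfl key2, Finset.sum_add_distrib, Finset.sum_add_distrib,
    Finset.sum_ite_eq', Finset.sum_ite_eq', Finset.sum_ite_eq']
  have hzr : z r = if r = t (i r) then 1 else 0 := by
    rw [hz r]
    apply if_congr _ rfl rfl
    constructor
    · intro h
      obtain ⟨k, hk, rfl⟩ := Finset.mem_image.1 h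
      rw [ht_letter k hk]
    · intro h
      exact Finset.mem_image.2 ⟨i r, Finset.mem_Icc.2 hp, h.symm⟩
  rw [hzr]
  unfold thetaPair
  have a1 : i r = 1 → ¬ r < t 1 := fun h h' => ht_min1 r hr h' h
  have a2 : 2 ≤ i r → r < t (i r) → r < t (i r - 1) := by
    intro h h'
    by_contra hc
    rcases Nat.lt_or_ge (t (i r - 1)) r with h2 | h2
    · exact ht_min (i r) h hp.2 r hr h2 h' rfl
    · have := ht_letter (i r - 1) (Finset.mem_Icc.2 ⟨by omega, by omega⟩)
      rw [show t (i r - 1) = r by omega] at this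
      omega
  have a3 := ht_mono (i r) hp.1
  have a4 : 2 ≤ i r → t (i r - 1) < t (i r) := by
    intro h
    have := ht_mono (i r - 1) (by omega) (by omega)
    rwa [Nat.sub_add_cancel hp.1] at this
  simp only [Finset.mem_Icc]
  by_cases h1 : i r = 1
  · have := a1 h1
    rw [h1] at *
    split_ifs <;> omega
  · split_ifs <;> omega
end

section
/- Let n ≥ 3 and let (i_1,…,i_N), N = n(n−1)/2, be a reduced word for the longest element w_0 of S_n, with greedy indices t_1 < ⋯ < t_{n−1} for the pattern (n−1, n−2, …, 1) (t_1 minimal with i_{t_1} = n−1; t_k minimal with t_k > t_{k−1} and i_{t_k} = n−k). Define z ∈ {0,1}^N by z_r = 1 if r ∈ {t_1,…,t_{n−1}} and z_r = 0 otherwise. Then z satisfies Littelmann's string inequalities for the highest root θ: for every 1 ≤ r ≤ N, z_r ≤ ⟨θ − Σ_{r<j≤N} z_j α_{i_j}, α^∨_{i_r}⟩. -/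
theorem cartan_sum_aux (p : ℕ) (hp : 1 ≤ p) (m : ℕ) :
    ∑ q ∈ Finset.Icc 1 m, cartan q p =
      2 * (if p ≤ m then 1 else 0) - (if 2 ≤ p ∧ p ≤ m + 1 then 1 else 0)
        - (if p + 1 ≤ m then 1 else 0) := by
  induction m with
  | zero => simp; split_ifs <;> omega
  | succ m ih =>
    rw [Finset.sum_Icc_succ_top (by omega), ih, cartan]
    split_ifs <;> omega

theorem cut_aux (t : ℕ → ℕ) (r M : ℕ)
    (h : ∀ a b, 1 ≤ a → a < b → b ≤ M → t a < t b) :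
    ∃ K ≤ M, (∀ k, 1 ≤ k → k ≤ K → t k ≤ r) ∧ (∀ k, K < k → k ≤ M → r < t k) := by
  induction M with
  | zero => exact ⟨0, le_rfl, by intros; omega, by intros; omega⟩
  | succ M ih =>
    by_cases hr : t (M + 1) ≤ r
    · refine ⟨M + 1, le_rfl, ?_, by intros; omega⟩
      intro k hk hk2
      rcases Nat.lt_or_ge k (M + 1) with h1 | h1
      · exact (h k (M + 1) hk h1 le_rfl).le.trans hr
      · have : k = M + 1 := by omega
        subst this; exact hr
    · obtain ⟨K, hK, h1, h2⟩ := ih (fun a b ha hab hb => h a b ha hab (by omega))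
      refine ⟨K, by omega, h1, ?_⟩
      intro k hk hk2
      rcases Nat.lt_or_ge k (M + 1) with h3 | h3
      · exact h2 k hk (by omega)
      · have : k = M + 1 := by omega
        subst this; omega

theorem greedy_indicator_satisfies_string_inequalities_theta_n
    (n N : ℕ) (hn : 3 ≤ n) (hN : N = n * (n - 1) / 2)
    (i : ℕ → ℕ) (hi : ∀ t ∈ Finset.Icc 1 N, 1 ≤ i t ∧ i t ≤ n - 1)
    (hword : ∀ j ∈ Finset.Icc 1 n,
      (((List.range N).map fun t => adjSwap (i (t + 1))).prod : Equiv.Perm ℕ) j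
        = n + 1 - j)
    (t : ℕ → ℕ)
    (ht_range : ∀ k ∈ Finset.Icc 1 (n - 1), t k ∈ Finset.Icc 1 N)
    (ht_letter : ∀ k ∈ Finset.Icc 1 (n - 1), i (t k) = n - k)
    (ht_mono : ∀ k, 1 ≤ k → k + 1 ≤ n - 1 → t k < t (k + 1))
    (ht_min1 : ∀ r ∈ Finset.Icc 1 N, r < t 1 → i r ≠ n - 1)
    (ht_min : ∀ k, 2 ≤ k → k ≤ n - 1 →
      ∀ r ∈ Finset.Icc 1 N, t (k - 1) < r → r < t k → i r ≠ n - k)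
    (z : ℕ → ℤ)
    (hz : ∀ r, z r = if r ∈ (Finset.Icc 1 (n - 1)).image t then 1 else 0) :
    ∀ r ∈ Finset.Icc 1 N,
      z r ≤ thetaPair n (i r) - ∑ j ∈ Finset.Icc (r + 1) N, z j * cartan (i j) (i r) := by
  intro r hr
  have hmono : ∀ a b, 1 ≤ a → a < b → b ≤ n - 1 → t a < t b := by
    intro a b ha hab
    induction b with
    | zero => omega
    | succ b ih =>
      intro hb
      rcases Nat.lt_or_ge a b with h | h
      · exact (ih h (by omega)).trans (ht_mono b (by omega) hb)
      · have : a = b := by omega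
        subst this; exact ht_mono a ha hb
  obtain ⟨K, hK, hK1, hK2⟩ := cut_aux t r (n - 1) hmono
  have hsum : ∑ j ∈ Finset.Icc (r + 1) N, z j * cartan (i j) (i r)
      = ∑ q ∈ Finset.Icc 1 (n - 1 - K), cartan q (i r) := by
    symm
    have hsub : (Finset.Icc (K + 1) (n - 1)).image t ⊆ Finset.Icc (r + 1) N := by
      intro x hx
      obtain ⟨k, hk, rfl⟩ := Finset.mem_image.1 hx
      rw [Finset.mem_Icc] at hk ⊢
      have := Finset.mem_Icc.1 (ht_range k (Finset.mem_Icc.2 (by omega)))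
      have := hK2 k (by omega) (by omega)
      omega
    rw [← Finset.sum_subset hsub]
    · rw [Finset.sum_image]
      · refine Finset.sum_bij' (fun q _ => n - q) (fun k _ => n - k) ?_ ?_ ?_ ?_ ?_
        · intro q hq; rw [Finset.mem_Icc] at *; omega
        · intro q hq; rw [Finset.mem_Icc] at *; omega
        · intro q hq; rw [Finset.mem_Icc] at hq; omega
        · intro q hq; rw [Finset.mem_Icc] at hq; omega
        · intro q hq
          rw [Finset.mem_Icc] at hq
          have hm : n - q ∈ Finset.Icc 1 (n - 1) := Finset.mem_Icc.2 (by omega)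
          rw [hz, if_pos (Finset.mem_image_of_mem t hm), ht_letter _ hm, one_mul]
          congr 1; omega
      · intro a ha b hb hab
        simp only [Finset.coe_Icc, Set.mem_Icc] at ha hb
        rcases lt_trichotomy a b with h | h | h
        · have := hmono a b (by omega) h (by omega); omega
        · exact h
        · have := hmono b a (by omega) h (by omega); omega
    · intro x hx hx2
      rw [hz, if_neg, zero_mul]
      intro hx3
      obtain ⟨k, hk, rfl⟩ := Finset.mem_image.1 hx3
      rw [Finset.mem_Icc] at hk hx
      apply hx2
      apply Finset.mem_image_of_mem
      rw [Finset.mem_Icc]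
      by_contra hc
      have := hK1 k (by omega) (by omega)
      omega
  have hir := hi r hr
  rw [hsum, cartan_sum_aux _ hir.1, hz, thetaPair]
  by_cases hmem : r ∈ (Finset.Icc 1 (n - 1)).image t
  · rw [if_pos hmem]
    obtain ⟨k, hk, rfl⟩ := Finset.mem_image.1 hmem
    have hl := ht_letter k hk
    rw [Finset.mem_Icc] at hk
    have hkK : k = K := by
      rcases lt_trichotomy k K with h | h | h
      · have := hmono k K (by omega) h hK
        have := hK1 K (by omega) le_rfl
        omega
      · exact h
      · have := hK2 k h (by omega); omega
    split_ifs <;> omega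
  · rw [if_neg hmem]
    have key : 1 ≤ K → i r ≠ n - 1 - K := by
      intro h1 h2
      have h3 := ht_min (K + 1) (by omega) (by omega) r hr
      have h4 := hK1 K h1 le_rfl
      have h5 : t K ≠ r := by
        rintro rfl
        exact hmem (Finset.mem_image_of_mem t (Finset.mem_Icc.2 ⟨h1, hK⟩))
      exact h3 (by simp only [Nat.add_sub_cancel]; omega)
        (hK2 _ (by omega) (by omega)) (by omega)
    split_ifs <;> omega
end

section
/- Let n ≥ 3 and let (i_1,…,i_N), N = n(n−1)/2, be a reduced word for the longest element w_0 of S_n, with greedy indices t_1 < ⋯ < t_{n−1} for the pattern (1,2,…,n−1), and let z ∈ {0,1}^N be the corresponding indicator vector (z_r = 1 iff r ∈ {t_1,…,t_{n−1}}). Let λ = Σ_{a=1}^{n−1} λ_a ω_a be a dominant integral weight (all λ_a ∈ ℤ_{≥0}). If a ∈ ℤ_{≥0}^N satisfies Littelmann's string inequalities for λ, i.e. a_r ≤ ⟨λ − Σ_{r<j≤N} a_j α_{i_j}, α^∨_{i_r}⟩ for all 1 ≤ r ≤ N, then a + z ∈ ℤ_{≥0}^N satisfies Littelmann's string inequalities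 for λ + θ, i.e. a_r + z_r ≤ ⟨λ + θ − Σ_{r<j≤N} (a_j + z_j) α_{i_j}, α^∨_{i_r}⟩ for all 1 ≤ r ≤ N. (This is the Littelmann-inequality part of the embedding ψ^n_1 : S_i(λ) → S_i(λ+θ) of lattice points of string polytopes given by x ↦ x + z_1.) -/
/-- for a reduced word `(i 1, …, i N)`, `N = n(n-1)/2`, of the longest
element `w₀` of `Sₙ` (`n ≥ 3`), let `z` be the indicator vector of the greedy indices
for the pattern `(1, 2, …, n-1)`, and let `λ = Σ lam a • ω_a` be a dominant integral
weight (so `⟨λ, α_p^∨⟩ = lam p`).  If `a ∈ ℤ_{≥0}^N` satisfies Littelmann's string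
inequalities for `λ`, then `a + z ∈ ℤ_{≥0}^N` satisfies them for `λ + θ`.
This is the Littelmann-inequality part of the embedding `ψ¹ₙ : S_i(λ) → S_i(λ+θ)`,
`x ↦ x + z₁`. -/
theorem add_z_one_preserves_string_inequalities
    (n N : ℕ) (hn : 3 ≤ n) (hN : N = n * (n - 1) / 2)
    (i : ℕ → ℕ) (hi : ∀ t ∈ Finset.Icc 1 N, 1 ≤ i t ∧ i t ≤ n - 1)
    (hword : ∀ j ∈ Finset.Icc 1 n,
      (((List.range N).map fun t => adjSwap (i (t + 1))).prod : Equiv.Perm ℕ) j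
        = n + 1 - j)
    (t : ℕ → ℕ)
    (ht_range : ∀ k ∈ Finset.Icc 1 (n - 1), t k ∈ Finset.Icc 1 N)
    (ht_letter : ∀ k ∈ Finset.Icc 1 (n - 1), i (t k) = k)
    (ht_mono : ∀ k, 1 ≤ k → k + 1 ≤ n - 1 → t k < t (k + 1))
    (ht_min1 : ∀ r ∈ Finset.Icc 1 N, r < t 1 → i r ≠ 1)
    (ht_min : ∀ k, 2 ≤ k → k ≤ n - 1 →
      ∀ r ∈ Finset.Icc 1 N, t (k - 1) < r → r < t k → i r ≠ k)
    (z : ℕ → ℤ)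
    (hz : ∀ r, z r = if r ∈ (Finset.Icc 1 (n - 1)).image t then 1 else 0)
    (lam : ℕ → ℤ) (hlam : ∀ p ∈ Finset.Icc 1 (n - 1), 0 ≤ lam p)
    (a : ℕ → ℤ) (ha_nonneg : ∀ r ∈ Finset.Icc 1 N, 0 ≤ a r)
    (ha_string : ∀ r ∈ Finset.Icc 1 N,
      a r ≤ lam (i r) - ∑ j ∈ Finset.Icc (r + 1) N, a j * cartan (i j) (i r)) :
    (∀ r ∈ Finset.Icc 1 N, 0 ≤ a r + z r) ∧
    (∀ r ∈ Finset.Icc 1 N,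
      a r + z r ≤ (lam (i r) + thetaPair n (i r))
        - ∑ j ∈ Finset.Icc (r + 1) N, (a j + z j) * cartan (i j) (i r)) := by
  have hzsum : ∀ r ∈ Finset.Icc 1 N,
      z r = ∑ k ∈ Finset.Icc 1 (n - 1), if r = t k then 1 else 0 := by
    intro r hr
    have h1 : ∀ k ∈ Finset.Icc 1 (n - 1),
        (if r = t k then (1 : ℤ) else 0) = if i r = k then (if r = t k then 1 else 0) else 0 := by
      intro k hk
      by_cases h : r = t k
      · have := ht_letter k hk
        rw [← h] at this
        simp [this]
      · simp [h]
    rw [Finset.sum_congr rfl h1, Finset.sum_ite_eq, hz]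
    have hir : i r ∈ Finset.Icc 1 (n - 1) := Finset.mem_Icc.2 (hi r hr)
    rw [if_pos hir]
    by_cases h : r = t (i r)
    · rw [if_pos h, if_pos]
      exact Finset.mem_image.2 ⟨i r, hir, h.symm⟩
    · rw [if_neg h, if_neg]
      intro hm
      obtain ⟨k, hk, hkr⟩ := Finset.mem_image.1 hm
      have := ht_letter k hk
      rw [hkr] at this
      exact h (by rw [this, hkr])
  have hz0 : ∀ r, 0 ≤ z r := by
    intro r; rw [hz]; split_ifs <;> simp
  refine ⟨fun r hr => add_nonneg (ha_nonneg r hr) (hz0 r), ?_⟩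
  intro r hr
  have hS : ∑ j ∈ Finset.Icc (r + 1) N, z j * cartan (i j) (i r)
      = ∑ k ∈ Finset.Icc 1 (n - 1), (if r < t k then 1 else 0) * cartan k (i r) := by
    have h1 : ∀ j ∈ Finset.Icc (r + 1) N, z j * cartan (i j) (i r)
        = ∑ k ∈ Finset.Icc 1 (n - 1), if j = t k then cartan k (i r) else 0 := by
      intro j hj
      rw [Finset.mem_Icc] at hj hr
      rw [hzsum j (Finset.mem_Icc.2 ⟨by omega, hj.2⟩), Finset.sum_mul]
      refine Finset.sum_congr rfl fun k hk => ?_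
      split_ifs with h
      · rw [h, ht_letter k hk, one_mul]
      · simp
    rw [Finset.sum_congr rfl h1, Finset.sum_comm]
    refine Finset.sum_congr rfl fun k hk => ?_
    rw [Finset.sum_ite_eq']
    have := Finset.mem_Icc.1 (ht_range k hk)
    by_cases h : r < t k
    · rw [if_pos (Finset.mem_Icc.2 ⟨h, this.2⟩), if_pos h, one_mul]
    · rw [if_neg (fun hm => h (Finset.mem_Icc.1 hm).1), if_neg h, zero_mul]
  have hp := hi r hr
  have hC : ∀ k ∈ Finset.Icc 1 (n - 1),
      (if r < t k then (1 : ℤ) else 0) * cartan k (i r)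
      = (if k = i r then 2 * (if r < t k then (1 : ℤ) else 0) else 0)
        - (if k = i r - 1 then (if r < t k then (1 : ℤ) else 0) else 0)
        - (if k = i r + 1 then (if r < t k then (1 : ℤ) else 0) else 0) := by
    intro k hk
    rw [Finset.mem_Icc] at hk
    unfold cartan
    split_ifs <;> first | omega | simp
  rw [Finset.sum_congr rfl hC, Finset.sum_sub_distrib, Finset.sum_sub_distrib,
    Finset.sum_ite_eq', Finset.sum_ite_eq', Finset.sum_ite_eq'] at hS
  have hzr : z r = if r = t (i r) then 1 else 0 := by
    have hir : i r ∈ Finset.Icc 1 (n - 1) := Finset.mem_Icc.2 hp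
    rw [hzsum r hr, Finset.sum_eq_single_of_mem (i r) hir]
    intro k hk hne
    rw [if_neg]
    intro h
    have := ht_letter k hk
    rw [← h] at this
    exact hne this.symm
  have hA := ha_string r hr
  simp only [add_mul, Finset.sum_add_distrib]
  suffices z r + ∑ j ∈ Finset.Icc (r + 1) N, z j * cartan (i j) (i r) ≤ thetaPair n (i r) by
    linarith
  rw [hS, hzr]
  unfold thetaPair
  have hup : i r + 1 ≤ n - 1 → t (i r) < t (i r + 1) := ht_mono (i r) hp.1
  have hdn : 2 ≤ i r → t (i r - 1) < t (i r) := by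
    intro h
    have := ht_mono (i r - 1) (by omega) (by omega)
    rwa [Nat.sub_add_cancel hp.1] at this
  have hne : 2 ≤ i r → r ≠ t (i r - 1) := by
    intro h h'
    have := ht_letter (i r - 1) (Finset.mem_Icc.2 ⟨by omega, by omega⟩)
    rw [← h'] at this
    omega
  have hmin : 2 ≤ i r → r < t (i r) → r < t (i r - 1) := by
    intro h h'
    by_contra hc
    have h3 := hne h
    exact ht_min (i r) h hp.2 r hr (by omega) h' rfl
  have hmin1 : i r = 1 → ¬ r < t (i r) := by
    intro h h'
    rw [h] at h'
    exact ht_min1 r hr h' h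
  simp only [Finset.mem_Icc]
  split_ifs <;> omega
end

section
/- Let n ≥ 3 and let (i_1,…,i_N), N = n(n−1)/2, be a reduced word for the longest element w_0 of S_n, with greedy indices t_1 < ⋯ < t_{n−1} for the pattern (n−1, n−2, …, 1), and let z ∈ {0,1}^N be the corresponding indicator vector (z_r = 1 iff r ∈ {t_1,…,t_{n−1}}). Let λ = Σ_{a=1}^{n−1} λ_a ω_a be a dominant integral weight (all λ_a ∈ ℤ_{≥0}). If a ∈ ℤ_{≥0}^N satisfies Littelmann's string inequalities for λ, i.e. a_r ≤ ⟨λ − Σ_{r<j≤N} a_j α_{i_j}, α^∨_{i_r}⟩ for all 1 ≤ r ≤ N, then a + z satisfies Littelmann's string inequalities for λ + θ, i.e. a_r + z_r ≤ ⟨λ + θ − Σ_{r<j≤N} (a_j + z_j) α_{i_j}, α^∨_{i_r}⟩ for all 1 ≤ r ≤ N. (This is the Littelmann-inequality part of the embedding ψ^n_{n−1} : S_i(λ) → S_i(λ+θ) given by x ↦ x + z_{n−1}.) -/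
/-- for a reduced word `(i 1, …, i N)`, `N = n(n-1)/2`, of the longest
element `w₀` of `Sₙ` (`n ≥ 3`), let `z` be the indicator vector of the greedy indices
for the pattern `(n-1, n-2, …, 1)`, and let `λ = Σ lam a • ω_a` be a dominant integral
weight (so `⟨λ, α_p^∨⟩ = lam p`).  If `a ∈ ℤ_{≥0}^N` satisfies Littelmann's string
inequalities for `λ`, then `a + z` satisfies them for `λ + θ`.
This is the Littelmann-inequality part of the embedding `ψⁿ_{n-1} : S_i(λ) → S_i(λ+θ)`,
`x ↦ x + z_{n-1}`. -/
theorem add_z_nsub1_preserves_string_inequalities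
    (n N : ℕ) (hn : 3 ≤ n) (hN : N = n * (n - 1) / 2)
    (i : ℕ → ℕ) (hi : ∀ t ∈ Finset.Icc 1 N, 1 ≤ i t ∧ i t ≤ n - 1)
    (hword : ∀ j ∈ Finset.Icc 1 n,
      (((List.range N).map fun t => adjSwap (i (t + 1))).prod : Equiv.Perm ℕ) j
        = n + 1 - j)
    (t : ℕ → ℕ)
    (ht_range : ∀ k ∈ Finset.Icc 1 (n - 1), t k ∈ Finset.Icc 1 N)
    (ht_letter : ∀ k ∈ Finset.Icc 1 (n - 1), i (t k) = n - k)
    (ht_mono : ∀ k, 1 ≤ k → k + 1 ≤ n - 1 → t k < t (k + 1))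
    (ht_min1 : ∀ r ∈ Finset.Icc 1 N, r < t 1 → i r ≠ n - 1)
    (ht_min : ∀ k, 2 ≤ k → k ≤ n - 1 →
      ∀ r ∈ Finset.Icc 1 N, t (k - 1) < r → r < t k → i r ≠ n - k)
    (z : ℕ → ℤ)
    (hz : ∀ r, z r = if r ∈ (Finset.Icc 1 (n - 1)).image t then 1 else 0)
    (lam : ℕ → ℤ) (hlam : ∀ p ∈ Finset.Icc 1 (n - 1), 0 ≤ lam p)
    (a : ℕ → ℤ) (ha_nonneg : ∀ r ∈ Finset.Icc 1 N, 0 ≤ a r)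
    (ha_string : ∀ r ∈ Finset.Icc 1 N,
      a r ≤ lam (i r) - ∑ j ∈ Finset.Icc (r + 1) N, a j * cartan (i j) (i r)) :
    (∀ r ∈ Finset.Icc 1 N, 0 ≤ a r + z r) ∧
    (∀ r ∈ Finset.Icc 1 N,
      a r + z r ≤ (lam (i r) + thetaPair n (i r))
        - ∑ j ∈ Finset.Icc (r + 1) N, (a j + z j) * cartan (i j) (i r)) := by
  have hlt : ∀ k l, 1 ≤ k → k < l → l ≤ n - 1 → t k < t l := by
    intro k l hk hkl hl
    induction l, hkl using Nat.le_induction with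
    | base => exact ht_mono k hk hl
    | succ l hkl ih =>
      exact lt_trans (ih (by omega)) (ht_mono l (by omega) hl)
  have hinj : Set.InjOn t (Finset.Icc 1 (n - 1) : Finset ℕ) := by
    intro k hk l hl hkl
    simp only [Finset.coe_Icc, Set.mem_Icc] at hk hl
    rcases lt_trichotomy k l with h | h | h
    · have := hlt k l hk.1 h hl.2
      omega
    · exact h
    · have := hlt l k hl.1 h hk.2
      omega
  have hz0 : ∀ r, 0 ≤ z r := by
    intro r
    rw [hz]
    split_ifs <;> simp
  refine ⟨fun r hr => add_nonneg (ha_nonneg r hr) (hz0 r), ?_⟩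
  intro r hr
  have h1 := ha_string r hr
  simp only [add_mul, Finset.sum_add_distrib]
  suffices h : z r + ∑ j ∈ Finset.Icc (r + 1) N, z j * cartan (i j) (i r)
      ≤ thetaPair n (i r) by linarith
  have hp := hi r hr
  obtain ⟨m, hm⟩ : ∃ m, m = n - i r := ⟨_, rfl⟩
  have hS : ∑ j ∈ Finset.Icc (r + 1) N, z j * cartan (i j) (i r)
      = ∑ k ∈ Finset.Icc 1 (n - 1), if r < t k then cartan (n - k) (i r) else 0 := by
    have e1 : ∑ j ∈ Finset.Icc (r + 1) N, z j * cartan (i j) (i r)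
        = ∑ j ∈ (Finset.Icc 1 (n - 1)).image t,
            if r < j then cartan (i j) (i r) else 0 := by
      simp only [hz, ite_mul, one_mul, zero_mul]
      rw [← Finset.sum_filter, ← Finset.sum_filter]
      refine Finset.sum_congr ?_ (fun _ _ => rfl)
      ext j
      simp only [Finset.mem_filter, Finset.mem_Icc]
      constructor
      · rintro ⟨h, h'⟩
        exact ⟨h', by omega⟩
      · rintro ⟨h, h'⟩
        refine ⟨⟨by omega, ?_⟩, h⟩
        obtain ⟨k, hk, rfl⟩ := Finset.mem_image.1 h
        exact (Finset.mem_Icc.1 (ht_range k hk)).2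
    rw [e1, Finset.sum_image hinj]
    refine Finset.sum_congr rfl (fun k hk => ?_)
    rw [ht_letter k hk]
  have hS2 : ∑ j ∈ Finset.Icc (r + 1) N, z j * cartan (i j) (i r)
      = (if r < t m then 2 else 0)
        - (if 2 ≤ m ∧ r < t (m - 1) then 1 else 0)
        - (if m + 1 ≤ n - 1 ∧ r < t (m + 1) then 1 else 0) := by
    rw [hS]
    have e2 : ∀ k ∈ Finset.Icc 1 (n - 1),
        (if r < t k then cartan (n - k) (i r) else 0)
        = (if k = m then (if r < t k then 2 else 0) else 0)
          - (if k = m - 1 then (if r < t k then 1 else 0) else 0)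
          - (if k = m + 1 then (if r < t k then 1 else 0) else (0 : ℤ)) := by
      intro k hk
      rw [Finset.mem_Icc] at hk
      unfold cartan
      split_ifs <;> first | rfl | omega
    rw [Finset.sum_congr rfl e2, Finset.sum_sub_distrib, Finset.sum_sub_distrib]
    simp only [Finset.sum_ite_eq', Finset.mem_Icc]
    have a1 : 1 ≤ m ∧ m ≤ n - 1 := by omega
    have a2 : (1 ≤ m - 1 ∧ m - 1 ≤ n - 1) ↔ 2 ≤ m := by omega
    have a3 : (1 ≤ m + 1 ∧ m + 1 ≤ n - 1) ↔ m + 1 ≤ n - 1 := by omega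
    simp only [a1, a2, a3, ite_and, and_self, if_true]
  have hzr : z r = if r = t m then 1 else 0 := by
    rw [hz]
    refine if_congr ?_ rfl rfl
    constructor
    · intro h
      obtain ⟨k, hk, hkr⟩ := Finset.mem_image.1 h
      have := ht_letter k hk
      rw [Finset.mem_Icc] at hk
      rw [hkr] at this
      have : k = m := by omega
      rw [← this, hkr]
    · intro h
      exact Finset.mem_image.2 ⟨m, Finset.mem_Icc.2 (by omega), h.symm⟩
  rw [hS2, hzr]
  have b1 : 2 ≤ m → t (m - 1) < t m := fun h => hlt _ _ (by omega) (by omega) (by omega)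
  have b2 : m + 1 ≤ n - 1 → t m < t (m + 1) := fun h => hlt _ _ (by omega) (by omega) h
  have b3 : m = 1 → ¬ r < t m := by
    intro h h'
    rw [h] at h'
    exact ht_min1 r hr h' (by omega)
  have b4 : 2 ≤ m → r < t m → r < t (m - 1) := by
    intro h h'
    by_contra hc
    rcases Nat.lt_or_ge (t (m - 1)) r with h2 | h2
    · exact ht_min m h (by omega) r hr h2 h' (by omega)
    · have h3 : r = t (m - 1) := by omega
      have := ht_letter (m - 1) (Finset.mem_Icc.2 (by omega))
      rw [← h3] at this
      omega
  unfold thetaPair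
  split_ifs <;> omega
end

section
/- Let λ_1, λ_2 ≥ 1 be integers and let x = (x_1,x_2,x_3) ∈ P(λ_1, λ_2). Then x does NOT lie in the image ψ(P(λ_1 − 1, λ_2 − 1)) if and only if x_3 = 0 or x_2 − x_3 = λ_1. Consequently A(λ_1,λ_2) := P(λ_1,λ_2) \ ψ(P(λ_1 − 1, λ_2 − 1)) = {x ∈ P(λ_1,λ_2) : x_3 = 0} ∪ {x ∈ P(λ_1,λ_2) : x_2 − x_3 = λ_1}. -/
/-- The set of lattice points of the string polytope `S_{(2,1,2)}(a ω₁ + b ω₂)` for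
`sl₃` and the reduced word `(2,1,2)`:
`P(a,b) = {(x₁,x₂,x₃) ∈ ℤ³ : 0 ≤ x₁, 0 ≤ x₃ ≤ b, x₃ ≤ x₂ ≤ a + x₃, x₁ ≤ b - 2x₃ + x₂}`. -/
def stringPts (a b : ℤ) : Set (ℤ × ℤ × ℤ) :=
  {x | 0 ≤ x.1 ∧ 0 ≤ x.2.2 ∧ x.2.2 ≤ b ∧ x.2.2 ≤ x.2.1 ∧ x.2.1 ≤ a + x.2.2 ∧
       x.1 ≤ b - 2 * x.2.2 + x.2.1}

/-- Addition of the string coordinates `(0,1,1)` of the weight-zero element `z₂` of the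
adjoint crystal `B(θ)` of `sl₃`: `ψ(x₁,x₂,x₃) = (x₁, x₂+1, x₃+1)`. -/
def psiMap (x : ℤ × ℤ × ℤ) : ℤ × ℤ × ℤ := (x.1, x.2.1 + 1, x.2.2 + 1)

/-- for `λ₁, λ₂ ≥ 1` and `x ∈ P(λ₁, λ₂)`, `x` does not lie in
`ψ(P(λ₁-1, λ₂-1))` iff `x₃ = 0` or `x₂ - x₃ = λ₁`; consequently the candidate big atom
is `A(λ₁,λ₂) = P(λ₁,λ₂) \ ψ(P(λ₁-1,λ₂-1)) = {x ∈ P : x₃ = 0} ∪ {x ∈ P : x₂ - x₃ = λ₁}`. -/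
theorem complement_of_psi_image_characterization
    (lam1 lam2 : ℤ) (h1 : 1 ≤ lam1) (h2 : 1 ≤ lam2) :
    (∀ x ∈ stringPts lam1 lam2,
      (x ∉ psiMap '' stringPts (lam1 - 1) (lam2 - 1) ↔
        x.2.2 = 0 ∨ x.2.1 - x.2.2 = lam1)) ∧
    stringPts lam1 lam2 \ psiMap '' stringPts (lam1 - 1) (lam2 - 1)
      = {x ∈ stringPts lam1 lam2 | x.2.2 = 0}
        ∪ {x ∈ stringPts lam1 lam2 | x.2.1 - x.2.2 = lam1} := by
  have key : ∀ x ∈ stringPts lam1 lam2,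
      (x ∉ psiMap '' stringPts (lam1 - 1) (lam2 - 1) ↔
        x.2.2 = 0 ∨ x.2.1 - x.2.2 = lam1) := by
    rintro ⟨a, b, c⟩ ⟨p1, p2, p3, p4, p5, p6⟩
    dsimp only at p1 p2 p3 p4 p5 p6 ⊢
    constructor
    · intro h
      by_contra hc
      apply h
      refine ⟨(a, b - 1, c - 1), ?_, ?_⟩
      · refine ⟨?_, ?_, ?_, ?_, ?_, ?_⟩ <;> dsimp only <;> omega
      · simp [psiMap]
    · rintro h ⟨⟨a', b', c'⟩, ⟨q1, q2, q3, q4, q5, q6⟩, he⟩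
      simp only [psiMap, Prod.mk.injEq] at he
      dsimp only at q1 q2 q3 q4 q5 q6
      omega
  refine ⟨key, ?_⟩
  ext x
  constructor
  · rintro ⟨hx, hn⟩
    rcases (key x hx).1 hn with h | h
    · exact Or.inl ⟨hx, h⟩
    · exact Or.inr ⟨hx, h⟩
  · rintro (⟨hx, h⟩ | ⟨hx, h⟩)
    · exact ⟨hx, (key x hx).2 (Or.inl h)⟩
    · exact ⟨hx, (key x hx).2 (Or.inr h)⟩
end

section
/- Let λ_1, λ_2 ≥ 1 be integers and let A(λ_1,λ_2) := P(λ_1,λ_2) \ ψ(P(λ_1 − 1, λ_2 − 1)). Then the weight map is injective on A(λ_1,λ_2): if x, y ∈ A(λ_1,λ_2) satisfy x_2 = y_2 and x_1 + x_3 = y_1 + y_3, then x = y. (Equivalently, A(λ_1,λ_2) contains at most one element of each sl_3-weight, since the weight of x is λ − x_2 α_1 − (x_1 + x_3) α_2.) -/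
/-- for `λ₁, λ₂ ≥ 1`, the weight map is injective on
`A(λ₁,λ₂) = P(λ₁,λ₂) \ ψ(P(λ₁-1,λ₂-1))`: since the `sl₃`-weight of `x` is
`λ - x₂ α₁ - (x₁ + x₃) α₂`, if `x, y ∈ A(λ₁,λ₂)` have `x₂ = y₂` and
`x₁ + x₃ = y₁ + y₃`, then `x = y`. -/
theorem weight_injective_on_atom
    (lam1 lam2 : ℤ) (h1 : 1 ≤ lam1) (h2 : 1 ≤ lam2) :
    ∀ x ∈ stringPts lam1 lam2 \ psiMap '' stringPts (lam1 - 1) (lam2 - 1),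
      ∀ y ∈ stringPts lam1 lam2 \ psiMap '' stringPts (lam1 - 1) (lam2 - 1),
        x.2.1 = y.2.1 → x.1 + x.2.2 = y.1 + y.2.2 → x = y := by
  rintro ⟨x1, x2, x3⟩ ⟨hx, hx'⟩ ⟨y1, y2, y3⟩ ⟨hy, hy'⟩ e1 e2
  have key : ∀ a b c : ℤ, (a, b, c) ∈ stringPts lam1 lam2 →
      (a, b, c) ∉ psiMap '' stringPts (lam1 - 1) (lam2 - 1) → c = 0 ∨ b = lam1 + c := by
    intro a b c h hn
    by_contra hc
    apply hn
    simp only [stringPts, Set.mem_setOf_eq] at h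
    refine ⟨(a, b - 1, c - 1), ?_, ?_⟩
    · simp only [stringPts, Set.mem_setOf_eq]
      omega
    · simp [psiMap]
  have kx := key _ _ _ hx hx'
  have ky := key _ _ _ hy hy'
  simp only [stringPts, Set.mem_setOf_eq] at hx hy e1 e2
  simp only [Prod.mk.injEq]
  omega
end

section
/- Let λ_1, λ_2 ≥ 1 be integers and let A(λ_1,λ_2) := P(λ_1,λ_2) \ ψ(P(λ_1 − 1, λ_2 − 1)). Then for every x ∈ P(λ_1,λ_2) there exists a unique y ∈ A(λ_1,λ_2) with y_2 = x_2 and y_1 + y_3 = x_1 + x_3. (Equivalently, A(λ_1,λ_2) contains exactly one element of each weight occurring in the crystal B(λ_1ω_1 + λ_2ω_2), i.e. A(λ_1,λ_2) is a big atom.) -/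
/-- for `λ₁, λ₂ ≥ 1` and every `x ∈ P(λ₁,λ₂)` there is a unique
`y ∈ A(λ₁,λ₂) = P(λ₁,λ₂) \ ψ(P(λ₁-1,λ₂-1))` with the same weight, i.e. with
`y₂ = x₂` and `y₁ + y₃ = x₁ + x₃`.  (So `A(λ₁,λ₂)` contains exactly one element of
each weight occurring in `B(λ₁ω₁ + λ₂ω₂)`: it is a big atom.) -/
theorem atom_contains_unique_element_of_each_weight
    (lam1 lam2 : ℤ) (h1 : 1 ≤ lam1) (h2 : 1 ≤ lam2) :
    ∀ x ∈ stringPts lam1 lam2,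
      ∃! y : ℤ × ℤ × ℤ,
        y ∈ stringPts lam1 lam2 \ psiMap '' stringPts (lam1 - 1) (lam2 - 1) ∧
        y.2.1 = x.2.1 ∧ y.1 + y.2.2 = x.1 + x.2.2 := by
  rintro ⟨x1, x2, x3⟩ hx
  have key : ∀ y1 y2 y3 : ℤ,
      ((y1, y2, y3) : ℤ × ℤ × ℤ) ∈ psiMap '' stringPts (lam1 - 1) (lam2 - 1) ↔
        (0 ≤ y1 ∧ 1 ≤ y3 ∧ y3 ≤ lam2 ∧ y3 ≤ y2 ∧ y2 + 1 ≤ lam1 + y3 ∧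
          y1 ≤ lam2 - 2 * y3 + y2) := by
    intro y1 y2 y3
    constructor
    · rintro ⟨⟨a, b, c⟩, h, e⟩
      simp only [psiMap, Prod.mk.injEq] at e
      simp only [stringPts, Set.mem_setOf_eq] at h
      omega
    · intro h
      refine ⟨(y1, y2 - 1, y3 - 1), ?_, ?_⟩
      · simp only [stringPts, Set.mem_setOf_eq]
        omega
      · simp [psiMap]
  simp only [stringPts, Set.mem_setOf_eq] at hx
  refine ⟨(x1 + x3 - max 0 (x2 - lam1), x2, max 0 (x2 - lam1)), ⟨⟨?_, ?_⟩, ?_, ?_⟩, ?_⟩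
  · simp only [stringPts, Set.mem_setOf_eq]
    omega
  · rw [key]
    omega
  · rfl
  · simp
  · rintro ⟨y1, y2, y3⟩ ⟨⟨hy, hn⟩, e1, e2⟩
    rw [key] at hn
    simp only [stringPts, Set.mem_setOf_eq] at hy
    simp only at e1 e2
    simp only [Prod.mk.injEq]
    omega
end

section
/- Let λ_1, λ_2 ≥ 1 be integers and let A(λ_1,λ_2) := P(λ_1,λ_2) \ ψ(P(λ_1 − 1, λ_2 − 1)). Then A(λ_1,λ_2) is stable under moving along 2-strings: if x = (x_1,x_2,x_3) ∈ A(λ_1,λ_2) and (x_1 + 1, x_2, x_3) ∈ P(λ_1,λ_2), then (x_1 + 1, x_2, x_3) ∈ A(λ_1,λ_2); likewise, if x_1 ≥ 1 and (x_1 − 1, x_2, x_3) ∈ P(λ_1,λ_2), then (x_1 − 1, x_2, x_3) ∈ A(λ_1,λ_2). -/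
/-- for `λ₁, λ₂ ≥ 1`, the set
`A(λ₁,λ₂) = P(λ₁,λ₂) \ ψ(P(λ₁-1,λ₂-1))` is stable under moving along `2`-strings
(the crystal operators `f₂` and `e₂` act on string coordinates for the word `(2,1,2)`
by `x ↦ (x₁ ± 1, x₂, x₃)` whenever the result lies in the polytope). -/
theorem atom_stable_along_two_strings
    (lam1 lam2 : ℤ) (h1 : 1 ≤ lam1) (h2 : 1 ≤ lam2) :
    ∀ x ∈ stringPts lam1 lam2 \ psiMap '' stringPts (lam1 - 1) (lam2 - 1),
      ((x.1 + 1, x.2.1, x.2.2) ∈ stringPts lam1 lam2 →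
        (x.1 + 1, x.2.1, x.2.2) ∈
          stringPts lam1 lam2 \ psiMap '' stringPts (lam1 - 1) (lam2 - 1)) ∧
      (1 ≤ x.1 → (x.1 - 1, x.2.1, x.2.2) ∈ stringPts lam1 lam2 →
        (x.1 - 1, x.2.1, x.2.2) ∈
          stringPts lam1 lam2 \ psiMap '' stringPts (lam1 - 1) (lam2 - 1)) := by
  have key : ∀ (l m a b c : ℤ), (a, b, c) ∈ psiMap '' stringPts (l - 1) (m - 1) ↔
      (0 ≤ a ∧ 1 ≤ c ∧ c ≤ m ∧ c ≤ b ∧ b ≤ l - 1 + c ∧ a ≤ m - 2 * c + b) := by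
    intro l m a b c
    constructor
    · rintro ⟨⟨p, q, r⟩, hp, he⟩
      simp only [psiMap, Prod.mk.injEq] at he
      simp only [stringPts, Set.mem_ofPred_eq] at hp
      omega
    · intro h
      refine ⟨(a, b - 1, c - 1), ?_, ?_⟩
      · simp only [stringPts, Set.mem_ofPred_eq]
        omega
      · simp [psiMap]
  rintro ⟨a, b, c⟩ ⟨hx, hn⟩
  rw [key] at hn
  simp only [stringPts, Set.mem_ofPred_eq] at hx
  refine ⟨fun h => ⟨h, ?_⟩, fun h0 h => ⟨h, ?_⟩⟩
  all_goals
    rw [key]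
    simp only [stringPts, Set.mem_ofPred_eq] at h
    dsimp only at *
    omega
end
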